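/- arXiv:2205.06685 — 2 statements merged into one kernel-verified Lean document; each statement's English description precedes it below -/
import Mathlib

section
/- Let (T_n) be the Tribonacci sequence defined by T_1=1, T_2=1, T_3=2 and T_n = T_{n-1} + T_{n-2} + T_{n-3} for n ≥ 4. Then for any prime p not dividing 11·19, p divides T_{p-1} if and only if there exist integers X, Y with p = X^2 + 11Y^2. -/
open scoped QuadraticAlgebra


abbrev EE := QuadraticAlgebra ℤ (-1) (-1)

theorem EE_norm (z : EE) : z.norm = z.re ^ 2 - z.re * z.im + z.im ^ 2 := by
  rw [QuadraticAlgebra.norm_def]; ring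

theorem EE_norm_eq_zero {z : EE} (h : z.norm = 0) : z = 0 := by
  rw [EE_norm] at h
  have h1 : z.im = 0 := by nlinarith [sq_nonneg (2 * z.re - z.im), sq_nonneg z.im]
  have h2 : z.re = 0 := by rw [h1] at h; nlinarith
  exact QuadraticAlgebra.ext h2 h1

instance EE_domain : IsDomain EE := by
  have : NoZeroDivisors EE := ⟨by
    intro a b h
    have h1 : a.norm * b.norm = 0 := by rw [← map_mul, h, QuadraticAlgebra.norm_zero]
    rcases mul_eq_zero.1 h1 with h | h
    · exact Or.inl (EE_norm_eq_zero h)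
    · exact Or.inr (EE_norm_eq_zero h)⟩
  exact NoZeroDivisors.to_isDomain _

theorem EE_norm_nonneg (z : EE) : 0 ≤ z.norm := by
  rw [EE_norm]
  nlinarith [sq_nonneg (2 * z.re - z.im), sq_nonneg z.im]

theorem EE_mul_star (z : EE) : z * star z = ((z.norm : ℤ) : EE) := by
  rw [← QuadraticAlgebra.algebraMap_norm_eq_mul_star]; rfl

theorem EE_prim : IsPrimitiveRoot (⟨0, 1⟩ : EE) 3 := by
  refine IsPrimitiveRoot.mk_of_lt _ (by norm_num) ?_ ?_
  · rw [pow_succ, pow_two]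
    ext <;> simp
  · intro l h0 h3 h
    interval_cases l
    · have := congrArg QuadraticAlgebra.im h
      simp at this
    · rw [pow_two] at h
      have := congrArg QuadraticAlgebra.im h
      simp at this

theorem EE_hom {k : Type} [CommRing k] (w : k) (hw : w * w = -1 - w) :
    ∃ φ : EE →+* k, ∀ z : EE, φ z = z.re + z.im * w := by
  refine ⟨(QuadraticAlgebra.lift (R := ℤ) (a := -1) (b := -1) ⟨w, by simp [hw]; ring⟩ : EE →ₐ[ℤ] k).toRingHom, ?_⟩
  intro z
  simp [QuadraticAlgebra.lift]

theorem EE_char (q : ℕ) [Fact q.Prime] (hq : q % 3 = 1) :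
    ∃ χ : MulChar (ZMod q) EE, orderOf χ = 3 := by
  apply MulChar.exists_mulChar_orderOf (ZMod q) (n := 3) ?_ EE_prim
  rw [ZMod.card]; omega

theorem EE_star_cube {z : EE} (h : z ^ 3 = 1) : star z = z ^ 2 := by
  have h1 : z.norm ^ 3 = 1 := by rw [← map_pow, h, QuadraticAlgebra.norm_one]
  have h2 : z.norm = 1 := by
    have := EE_norm_nonneg z
    exact (pow_eq_one_iff_of_nonneg this (by norm_num)).1 h1
  have h3 := EE_mul_star z
  rw [h2] at h3
  calc star z = z ^ 3 * star z := by rw [h, one_mul]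
    _ = z ^ 2 * (z * star z) := by ring
    _ = z ^ 2 := by rw [h3]; simp

theorem EE_star_char (q : ℕ) [Fact q.Prime] (χ : MulChar (ZMod q) EE) (h : χ ^ 3 = 1) :
    χ.ringHomComp (starRingEnd EE) = χ⁻¹ := by
  have hi : χ⁻¹ = χ ^ 2 := by
    rw [inv_eq_iff_mul_eq_one, ← h, pow_succ' χ 2]
  rw [hi]
  refine MulChar.ext fun x => ?_
  rw [MulChar.ringHomComp_apply, MulChar.pow_apply_coe]
  apply EE_star_cube
  rw [← MulChar.pow_apply_coe, h, MulChar.one_apply_coe]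

theorem EE_star_jac (q : ℕ) [Fact q.Prime] (χ : MulChar (ZMod q) EE) (h : χ ^ 3 = 1) :
    star (jacobiSum χ χ) = jacobiSum χ⁻¹ χ⁻¹ := by
  rw [← EE_star_char q χ h, jacobiSum_ringHomComp]; rfl

theorem EE_ne_one {q : ℕ} [Fact q.Prime] {k : Type*} [CommRing k] (χ : MulChar (ZMod q) k) (h : orderOf χ = 3) :
    χ ≠ 1 ∧ χ * χ ≠ 1 ∧ χ ^ 3 = 1 := by
  refine ⟨?_, ?_, ?_⟩
  · rintro rfl; simp at h
  · intro h2
    rw [← pow_two] at h2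
    have := orderOf_dvd_of_pow_eq_one h2
    rw [h] at this; omega
  · rw [← h]; exact pow_orderOf_eq_one _

theorem EE_norm_jac (q : ℕ) [Fact q.Prime] (χ : MulChar (ZMod q) EE) (h : orderOf χ = 3) :
    (jacobiSum χ χ).norm = q := by
  obtain ⟨h1, h2, h3⟩ := EE_ne_one χ h
  let f := algebraMap EE (FractionRing EE)
  have hf : Function.Injective f := IsFractionRing.injective EE (FractionRing EE)
  have hch : ringChar (FractionRing EE) ≠ ringChar (ZMod q) := by
    have : CharZero (FractionRing EE) := charZero_of_injective_algebraMap hf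
    rw [ringChar.eq_zero, ZMod.ringChar_zmod_n]
    exact (Fact.out : q.Prime).ne_zero.symm
  have hi := MulChar.injective_ringHomComp (R := ZMod q) hf
  have key := jacobiSum_mul_jacobiSum_inv hch (χ := χ.ringHomComp f) (φ := χ.ringHomComp f)
    (by rw [Ne, MulChar.ringHomComp_eq_one_iff hf]; exact h1)
    (by rw [Ne, MulChar.ringHomComp_eq_one_iff hf]; exact h1)
    (by rw [← MulChar.ringHomComp_mul, Ne, MulChar.ringHomComp_eq_one_iff hf]; exact h2)
  rw [MulChar.ringHomComp_inv, jacobiSum_ringHomComp, jacobiSum_ringHomComp, ← EE_star_jac q χ h3, ← map_mul, EE_mul_star, ZMod.card] at key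
  rw [← map_natCast f] at key
  have := hf key
  exact_mod_cast this

theorem EE_jac_mod (q : ℕ) [Fact q.Prime] (hq : q % 3 = 1) (χ : MulChar (ZMod q) EE) (h : orderOf χ = 3) :
    ∃ z : EE, jacobiSum χ χ = -1 + 3 * z := by
  obtain ⟨h1, h2, h3⟩ := EE_ne_one χ h
  obtain ⟨z, -, hz⟩ := exists_jacobiSum_eq_neg_one_add (by norm_num : 2 < 3) h3 h3 (by rw [ZMod.card]; omega) EE_prim
  refine ⟨-z * ⟨0, 1⟩, ?_⟩
  rw [hz]
  have : ((⟨0, 1⟩ : EE) - 1) ^ 2 = -3 * ⟨0, 1⟩ := by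
    rw [pow_two]; ext <;> simp
  rw [this]; ring

theorem EE_frob {k : Type} [Field k] (p : ℕ) [Fact p.Prime] [CharP k p] (φ : EE →+* k) (z : EE) :
    (p % 3 = 1 → φ z ^ p = φ z) ∧ (p % 3 = 2 → φ z ^ p = φ (star z)) := by
  have hz (z : EE) : φ z = z.re + z.im * φ ⟨0, 1⟩ := by
    conv_lhs => rw [show z = (z.re : EE) + (z.im : EE) * ⟨0, 1⟩ by ext <;> simp]
    rw [map_add, map_mul, map_intCast, map_intCast]
  have hw : φ ⟨0, 1⟩ ^ 3 = 1 := by rw [← map_pow, EE_prim.pow_eq_one, map_one]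
  have hi (n : ℤ) : (n : k) ^ p = n := by
    have := map_intCast (frobenius k p) n
    rwa [frobenius_def] at this
  have hp : φ z ^ p = z.re + z.im * φ ⟨0, 1⟩ ^ p := by
    rw [hz z, add_pow_char, mul_pow, hi, hi]
  constructor
  · intro h
    rw [hp, ← Nat.div_add_mod p 3, h, pow_add, pow_mul, hw, hz z]; simp
  · intro h
    rw [hp, ← Nat.div_add_mod p 3, h, pow_add, pow_mul, hw, ← map_pow, hz (star z), hz (_ ^ 2), pow_two]
    simp; ring


theorem cube_root_eq_one {k : Type} [Field k] (h3 : (3 : k) ≠ 0) (φ : EE →+* k) {z : EE}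
    (hz : z ^ 3 = 1) (h : φ z = 1) : z = 1 := by
  by_contra hne
  have h1 : (z - 1) * (z ^ 2 + z + 1) = 0 := by linear_combination hz
  rcases mul_eq_zero.1 h1 with h1 | h1
  · exact hne (sub_eq_zero.1 h1)
  · apply h3
    have := congrArg φ h1
    simp only [map_add, map_pow, map_one, map_zero, h] at this
    linear_combination this

theorem three_ne_zero_of {k : Type} [Field k] (p : ℕ) (hp : p.Prime) [CharP k p] (h : p ≠ 3) :
    (3 : k) ≠ 0 := by
  intro h3
  have : ((3 : ℕ) : k) = 0 := by exact_mod_cast h3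
  rw [CharP.cast_eq_zero_iff k p] at this
  exact h ((Nat.prime_dvd_prime_iff_eq hp Nat.prime_three).1 this)

theorem jac_recip (p q : ℕ) [Fact p.Prime] [Fact q.Prime] (hpq : p ≠ q) (hp3 : p ≠ 3)
    {k : Type} [Field k] [IsAlgClosed k] [CharP k p] (φ : EE →+* k)
    (χ : MulChar (ZMod q) EE) (hχ : orderOf χ = 3) :
    (p % 3 = 1 → φ (jacobiSum χ χ) ^ ((p - 1) / 3)
      = φ (χ p) * φ (star (jacobiSum χ χ)) ^ ((p - 1) / 3)) ∧
    (p % 3 = 2 → φ (star (jacobiSum χ χ)) ^ ((p + 1) / 3)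
      = φ (χ p) * φ (jacobiSum χ χ) ^ ((p + 1) / 3)) := by
  have hp : p.Prime := Fact.out
  have hq : q.Prime := Fact.out
  have h3 : (3 : k) ≠ 0 := three_ne_zero_of p hp hp3
  obtain ⟨h1, h2, hc⟩ := EE_ne_one χ hχ
  have hqk : (q : k) ≠ 0 := by
    rw [Ne, CharP.cast_eq_zero_iff k p, Nat.prime_dvd_prime_iff_eq hp hq]
    exact hpq
  have : NeZero (q : k) := ⟨hqk⟩
  have : NeZero q := ⟨hq.ne_zero⟩
  set χk := χ.ringHomComp φ with hχk
  have hck : χk ^ 3 = 1 := by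
    rw [hχk, MulChar.ringHomComp_pow, hc, MulChar.ringHomComp_one]
  have hk1 : χk ≠ 1 := by
    intro h
    apply h1
    refine MulChar.ext fun x => ?_
    rw [MulChar.one_apply_coe]
    apply cube_root_eq_one h3 φ
    · rw [← MulChar.pow_apply_coe, hc, MulChar.one_apply_coe]
    · rw [← MulChar.ringHomComp_apply, ← hχk, h, MulChar.one_apply_coe]
  have : Fact (Nat.Prime 3) := ⟨Nat.prime_three⟩
  have hord : orderOf χk = 3 := orderOf_eq_prime hck hk1
  obtain ⟨ζ, hζ⟩ := HasEnoughRootsOfUnity.exists_primitiveRoot k q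
  set ψ := AddChar.zmodChar q hζ.pow_eq_one
  have hψ : ψ.IsPrimitive := AddChar.zmodChar_primitive_of_primitive_root q hζ
  have hm1 : χk (-1) = 1 := by
    have e1 : χk (-1) ^ 3 = 1 := by
      rw [← MulChar.pow_apply' _ (by norm_num), hck, MulChar.one_apply (by simp)]
    have e2 : χk (-1) ^ 2 = 1 := by
      rw [← map_pow]; simp
    calc χk (-1) = χk (-1) ^ 2 * χk (-1) := by rw [e2, one_mul]
      _ = 1 := by rw [← pow_succ, e1]
  set J := jacobiSum χ χ with hJ
  set g := gaussSum χk ψ with hg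
  have hg3 : g ^ 3 = q * φ J := by
    have := gaussSum_pow_eq_prod_jacobiSum (χ := χk) (ψ := ψ) (by rw [hord]; norm_num) hψ
    rw [hord, hm1, ZMod.card] at this
    simp only [one_mul, Nat.add_one_sub_one, Nat.Ico_succ_singleton, Finset.prod_singleton, pow_one] at this
    rw [hg, this, hχk, jacobiSum_ringHomComp]
  have hJJ : φ J * φ (star J) = q := by
    rw [← map_mul, EE_mul_star, EE_norm_jac q χ hχ]; simp
  have hJ0 : φ J ≠ 0 := fun h => hqk (by rw [← hJJ, h, zero_mul])
  have hg0 : g ≠ 0 := by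
    apply gaussSum_ne_zero_of_nontrivial _ hk1 hψ
    rwa [ZMod.card]
  have hpu : IsUnit ((p : ZMod q)) := by
    rw [isUnit_iff_ne_zero, Ne, ZMod.natCast_eq_zero_iff, Nat.prime_dvd_prime_iff_eq hq hp]
    exact hpq.symm
  have hfr : g ^ p = gaussSum (χk ^ p) (ψ.mulShift p) := by
    rw [hg, gaussSum_frob, AddChar.pow_mulShift]
  have hcp : φ (χ p) = χk p := by rw [hχk, MulChar.ringHomComp_apply]
  have hcp3 : χk p ^ 3 = 1 := by
    rw [← MulChar.pow_apply' _ (by norm_num), hck, MulChar.one_apply hpu]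
  have hJf := EE_frob p φ J
  rw [hcp]
  constructor
  · intro hmod
    obtain ⟨n, hn⟩ : ∃ n, p = 3 * n + 1 := ⟨p / 3, by omega⟩
    have e : (p - 1) / 3 = n := by omega
    have hχp : χk ^ p = χk := by rw [hn, pow_succ, pow_mul, hck, one_pow, one_mul]
    have hs := gaussSum_mulShift χk ψ hpu.unit
    rw [IsUnit.unit_spec, ← hg] at hs
    rw [hχp] at hfr
    rw [← hfr, hn, pow_succ, pow_mul, hg3, ← hn, ← hJJ] at hs
    have hs2 : χk p * (φ J * φ (star J) * φ J) ^ n = 1 := by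
      apply mul_right_cancel₀ hg0
      rw [one_mul, mul_assoc]; exact hs
    have hJ1 : φ J ^ (3 * n) = 1 := by
      have := hJf.1 hmod
      rw [hn, pow_succ] at this
      exact mul_right_cancel₀ hJ0 (by rw [this, one_mul])
    rw [e]
    apply mul_left_cancel₀ (pow_ne_zero (2 * n) hJ0)
    calc φ J ^ (2 * n) * φ J ^ n = φ J ^ (3 * n) := by ring
      _ = χk p * (φ J * φ (star J) * φ J) ^ n := by rw [hJ1, hs2]
      _ = _ := by ring
  · intro hmod
    obtain ⟨n, hn⟩ : ∃ n, p = 3 * n + 2 := ⟨p / 3, by omega⟩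
    have e : (p + 1) / 3 = n + 1 := by omega
    have hχp : χk ^ p = χk ^ 2 := by rw [hn, pow_add, pow_mul, hck, one_pow, one_mul]
    have hs := gaussSum_mulShift (χk ^ 2) ψ hpu.unit
    rw [IsUnit.unit_spec, ← hχp, ← hfr, hχp] at hs
    have hgh := gaussSum_mul_gaussSum_pow_orderOf_sub_one hk1 hψ
    rw [hord, hm1, ZMod.card, one_mul, ← hg, Nat.add_one_sub_one, ← hs, MulChar.pow_apply' _ (by norm_num), ← hJJ] at hgh
    have hg3' : g * g ^ p = (φ J * φ (star J) * φ J) ^ (n + 1) := by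
      rw [hJJ, ← hg3, hn]; ring
    have hJ1 : φ J ^ (3 * n + 3) = φ J * φ (star J) := by
      rw [← hJf.2 hmod, hn]; ring
    rw [e]
    apply mul_left_cancel₀ (pow_ne_zero (2 * n + 2) hJ0)
    calc φ J ^ (2 * n + 2) * φ (star J) ^ (n + 1) = (φ J * φ (star J) * φ J) ^ (n + 1) := by ring
      _ = χk p ^ 3 * (g * g ^ p) := by rw [hg3', hcp3, one_mul]
      _ = χk p * (g * (χk p ^ 2 * g ^ p)) := by ring
      _ = χk p * φ J ^ (3 * n + 3) := by rw [hgh, hJ1]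
      _ = _ := by ring


theorem inert_dvd (q : ℕ) [Fact q.Prime] (hq : q % 3 = 2) (x y : ℤ)
    (h : (q : ℤ) ∣ x ^ 2 - x * y + y ^ 2) : (q : ℤ) ∣ x ∧ (q : ℤ) ∣ y := by
  have hqp : q.Prime := Fact.out
  rw [← ZMod.intCast_zmod_eq_zero_iff_dvd] at h
  rw [← ZMod.intCast_zmod_eq_zero_iff_dvd, ← ZMod.intCast_zmod_eq_zero_iff_dvd]
  push_cast at h
  generalize (x : ZMod q) = u at *
  generalize (y : ZMod q) = v at *
  by_cases hu : u = 0
  · subst hu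
    refine ⟨rfl, ?_⟩
    have : v ^ 2 = 0 := by linear_combination h
    exact pow_eq_zero_iff (by norm_num) |>.1 this
  by_cases hv : v = 0
  · subst hv
    have : u ^ 2 = 0 := by linear_combination h
    exact absurd (pow_eq_zero_iff (by norm_num) |>.1 this) hu
  exfalso
  have hc : u ^ 3 = (-v) ^ 3 := by linear_combination (u + v) * h
  have h1 := ZMod.pow_card_sub_one_eq_one hu
  have h2 := ZMod.pow_card_sub_one_eq_one (neg_ne_zero.2 hv)
  obtain ⟨n, hn⟩ : ∃ n, q - 1 = 3 * n + 1 := ⟨q / 3, by omega⟩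
  rw [hn, pow_succ, pow_mul] at h1 h2
  rw [hc] at h1
  have h3 : u = -v := by
    have : ((-v) ^ 3) ^ n ≠ 0 := pow_ne_zero _ (pow_ne_zero _ (neg_ne_zero.2 hv))
    apply mul_left_cancel₀ this
    rw [h1, h2]
  subst h3
  have h4 : (3 : ZMod q) * v ^ 2 = 0 := by linear_combination h
  rcases mul_eq_zero.1 h4 with h5 | h5
  · have : ((3 : ℕ) : ZMod q) = 0 := by exact_mod_cast h5
    rw [ZMod.natCast_eq_zero_iff, Nat.prime_dvd_prime_iff_eq hqp Nat.prime_three] at this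
    omega
  · exact hv (pow_eq_zero_iff (by norm_num) |>.1 h5)

theorem div_of_im (q : ℕ) [Fact q.Prime] (γ : EE) (h : (q : ℤ) ∣ γ.im) (hn : (q : ℤ) ∣ γ.norm) :
    ∃ δ : EE, γ = (q : EE) * δ := by
  have hqp : Prime (q : ℤ) := Nat.prime_iff_prime_int.1 Fact.out
  obtain ⟨b, hb⟩ := h
  have : (q : ℤ) ∣ γ.re ^ 2 := by
    rw [EE_norm] at hn
    obtain ⟨c, hc⟩ := hn
    exact ⟨c + γ.re * b - γ.im * b, by linear_combination hc + (γ.re - γ.im) * hb⟩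
  obtain ⟨a, ha⟩ := hqp.dvd_of_dvd_pow this
  refine ⟨⟨a, b⟩, ?_⟩
  ext <;> simp [ha, hb]

theorem split_factor (q : ℕ) [Fact q.Prime] (hq : q % 3 = 1) (α : EE) (h : (q : ℤ) ∣ α.norm) :
    ∃ χ : MulChar (ZMod q) EE, orderOf χ = 3 ∧ ∃ δ, α = jacobiSum χ χ * δ := by
  have hqp : Prime (q : ℤ) := Nat.prime_iff_prime_int.1 Fact.out
  obtain ⟨χ, hχ⟩ := EE_char q hq
  obtain ⟨h1, h2, h3⟩ := EE_ne_one χ hχ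
  have hN := EE_norm_jac q χ hχ
  have hst := EE_star_jac q χ h3
  have hms := EE_mul_star (jacobiSum χ χ)
  generalize hJ : jacobiSum χ χ = J at *
  rw [hN] at hms
  have hJ0 : J ≠ 0 := by
    rintro rfl
    rw [QuadraticAlgebra.norm_zero] at hN
    exact hqp.ne_zero hN.symm
  have hJs0 : star J ≠ 0 := by
    intro h
    exact hJ0 (star_eq_zero.1 h)
  have key : (q : ℤ) ∣ (α * J).im * (α * star J).im := by
    have e : (α * J).im * (α * star J).im = α.im ^ 2 * J.norm - J.im ^ 2 * α.norm := by
      rw [EE_norm, EE_norm]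
      simp only [QuadraticAlgebra.im_mul, QuadraticAlgebra.re_star, QuadraticAlgebra.im_star]
      ring
    rw [e, hN]
    exact dvd_sub (Dvd.intro_left _ rfl) (Dvd.dvd.mul_left h _)
  rcases hqp.dvd_or_dvd key with hd | hd
  · obtain ⟨δ, hδ⟩ := div_of_im q (α * J) hd (by rw [map_mul]; exact Dvd.dvd.mul_right h _)
    refine ⟨χ⁻¹, by rw [orderOf_inv, hχ], δ, ?_⟩
    rw [← hst]
    apply mul_right_cancel₀ hJ0
    rw [hδ]
    push_cast at hms
    linear_combination -δ * hms
  · obtain ⟨δ, hδ⟩ := div_of_im q (α * star J) hd (by rw [map_mul]; exact Dvd.dvd.mul_right h _)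
    refine ⟨χ, hχ, δ, ?_⟩
    rw [hJ]
    apply mul_right_cancel₀ hJs0
    rw [hδ]
    push_cast at hms
    linear_combination -δ * hms

def Recip (α : EE) (X : ℤ →* EE) : Prop :=
  ∀ (p : ℕ) [Fact p.Prime], p ≠ 3 → ¬ (p : ℤ) ∣ α.norm →
    ∀ (k : Type) [Field k] [IsAlgClosed k] [CharP k p] (φ : EE →+* k),
    (p % 3 = 1 → φ α ^ ((p - 1) / 3) = φ (X p) * φ (star α) ^ ((p - 1) / 3)) ∧
    (p % 3 = 2 → φ (star α) ^ ((p + 1) / 3) = φ (X p) * φ α ^ ((p + 1) / 3))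

theorem gen_recip (N : ℕ) : ∀ (α : EE), α.norm = N → 3 ∣ α.im → ¬ 3 ∣ α.re →
    ∃ X : ℤ →* EE, (∀ n m : ℤ, α.norm ∣ n - m → X n = X m) ∧
      (∀ n : ℤ, IsCoprime n α.norm → X n ^ 3 = 1) ∧ Recip α X := by
  induction N using Nat.strong_induction_on with
  | _ N ih =>
  intro α hN him hre
  by_cases hN1 : N = 1
  · subst hN1
    rw [EE_norm] at hN
    obtain ⟨c, hc⟩ := him
    have hc0 : c = 0 := by
      rw [hc] at hN
      push_cast at hN
      by_contra h
      have : 1 ≤ c ^ 2 := by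
        have := sq_pos_of_ne_zero h
        omega
      nlinarith [sq_nonneg (2 * α.re - 3 * c)]
    have him0 : α.im = 0 := by rw [hc, hc0]; rfl
    have hst : star α = α := by
      ext <;> simp [him0]
    refine ⟨1, fun _ _ _ => rfl, fun _ _ => by simp, ?_⟩
    intro p _ _ _ k _ _ _ φ
    rw [hst]
    simp
  obtain ⟨q, hq, hqN⟩ := Nat.exists_prime_and_dvd hN1
  have : Fact q.Prime := ⟨hq⟩
  have hqd : (q : ℤ) ∣ α.norm := by rw [hN]; exact_mod_cast hqN
  have hqi : Prime (q : ℤ) := Nat.prime_iff_prime_int.1 hq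
  have hN0 : N ≠ 0 := by
    rintro rfl
    have := EE_norm_eq_zero (z := α) (by simpa using hN)
    subst this
    simp at hre
  have hq3 : q ≠ 3 := by
    rintro rfl
    apply hre
    rw [EE_norm] at hqd
    obtain ⟨c, hc⟩ := him
    obtain ⟨d, hd⟩ := hqd
    have : (3 : ℤ) ∣ α.re ^ 2 := ⟨d + α.re * c - α.im * c, by
      push_cast at hd; linear_combination hd + (α.re - α.im) * hc⟩
    exact Int.prime_three.dvd_of_dvd_pow this
  have hmod : q % 3 = 1 ∨ q % 3 = 2 := by
    have : ¬ 3 ∣ q := fun h => hq3 ((Nat.prime_dvd_prime_iff_eq Nat.prime_three hq).1 h).symm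
    omega
  rcases hmod with hmod | hmod
  · obtain ⟨χ, hχ, δ, hδ⟩ := split_factor q hmod α hqd
    obtain ⟨h1, h2, h3⟩ := EE_ne_one χ hχ
    obtain ⟨z, hz⟩ := EE_jac_mod q hmod χ hχ
    have hn : α.norm = q * δ.norm := by rw [hδ, map_mul, EE_norm_jac q χ hχ]
    have hα : α = -δ + 3 * (z * δ) := by rw [hδ, hz]; ring
    have hαre : α.re = - δ.re + 3 * (z * δ).re := by
      conv_lhs => rw [hα]
      simp
    have hαim : α.im = - δ.im + 3 * (z * δ).im := by
      conv_lhs => rw [hα]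
      simp
    have hδn := EE_norm_nonneg δ
    obtain ⟨M, hM⟩ : ∃ M : ℕ, δ.norm = M := ⟨δ.norm.toNat, by omega⟩
    have hNM : N = q * M := by
      rw [hN, hM] at hn; exact_mod_cast hn
    have hM0 : 0 < M := by
      rcases Nat.eq_zero_or_pos M with h | h
      · subst h; exact absurd hNM hN0
      · exact h
    have hMN : M < N := by rw [hNM]; nlinarith [hq.two_le]
    obtain ⟨X, hX1, hX2, hX3⟩ := ih M hMN δ hM (by omega) (by omega)
    refine ⟨X * χ.toMonoidHom.comp (Int.castRingHom (ZMod q)).toMonoidHom, ?_, ?_, ?_⟩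
    · intro n m hnm
      rw [hn] at hnm
      have e1 := hX1 n m ((Dvd.intro_left _ rfl).trans hnm)
      have e2 : (n : ZMod q) = m := by
        rw [← sub_eq_zero, ← Int.cast_sub, ZMod.intCast_zmod_eq_zero_iff_dvd]
        exact (Dvd.intro _ rfl).trans hnm
      simp [e1, e2]
    · intro n hnc
      rw [hn] at hnc
      have e1 := hX2 n (IsCoprime.of_mul_right_right hnc)
      have e2 : IsUnit (n : ZMod q) := by
        rw [isUnit_iff_ne_zero, Ne, ZMod.intCast_zmod_eq_zero_iff_dvd]
        intro hd
        have := IsCoprime.of_mul_right_left hnc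
        exact hqi.not_isUnit (this.isUnit_of_dvd' hd dvd_rfl)
      have e3 : χ (n : ZMod q) ^ 3 = 1 := by
        rw [← MulChar.pow_apply' _ (by norm_num), h3, MulChar.one_apply e2]
      simp [mul_pow, e1, e3]
    · intro p hpf hp3 hpn k _ _ _ φ
      rw [hn] at hpn
      have hpq : p ≠ q := by
        rintro rfl
        exact hpn (Dvd.intro _ rfl)
      have a1 := jac_recip p q hpq hp3 φ χ hχ
      have a2 := hX3 p hp3 (fun h => hpn (Dvd.dvd.mul_left h _)) k φ
      have e : (X * χ.toMonoidHom.comp (Int.castRingHom (ZMod q)).toMonoidHom) (p : ℤ) = X p * χ p := by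
        simp
      rw [e, hδ, star_mul']
      simp only [map_mul, mul_pow]
      constructor
      · intro h
        rw [a1.1 h, a2.1 h]; ring
      · intro h
        rw [a1.2 h, a2.2 h]; ring
  · have hqd' := hqd
    rw [EE_norm] at hqd'
    obtain ⟨⟨a, ha⟩, ⟨b, hb⟩⟩ := inert_dvd q hmod _ _ hqd'
    have hα : α = (q : EE) * ⟨a, b⟩ := by ext <;> simp [ha, hb]
    set δ : EE := ⟨a, b⟩ with hδ
    have hn : α.norm = q * (q * δ.norm) := by
      rw [hα, map_mul, QuadraticAlgebra.norm_natCast]; ring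
    have hδn := EE_norm_nonneg δ
    obtain ⟨M, hM⟩ : ∃ M : ℕ, δ.norm = M := ⟨δ.norm.toNat, by omega⟩
    have hNM : N = q * (q * M) := by
      rw [hN, hM] at hn; exact_mod_cast hn
    have hM0 : 0 < M := by
      rcases Nat.eq_zero_or_pos M with h | h
      · subst h; exact absurd hNM hN0
      · exact h
    have hMN : M < N := by rw [hNM]; nlinarith [hq.two_le, Nat.mul_le_mul hq.two_le hq.two_le]
    have h3q : ¬ (3 : ℤ) ∣ q := by omega
    obtain ⟨X, hX1, hX2, hX3⟩ := ih M hMN δ hM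
      (by
        rw [hb] at him
        exact (Int.prime_three.dvd_or_dvd him).resolve_left h3q)
      (by
        intro h
        apply hre
        rw [ha]; exact Dvd.dvd.mul_left h _)
    have hdd : δ.norm ∣ α.norm := by rw [hn]; exact Dvd.dvd.mul_left (Dvd.intro_left _ rfl) _
    refine ⟨X, fun n m h => hX1 n m (hdd.trans h), fun n h => hX2 n (h.of_isCoprime_of_dvd_right hdd), ?_⟩
    intro p hpf hp3 hpn k _ _ _ φ
    have a2 := hX3 p hp3 (fun h => hpn (h.trans hdd)) k φ
    rw [hα, star_mul', star_natCast]
    simp only [map_mul, mul_pow]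
    constructor
    · intro h
      rw [a2.1 h]; ring
    · intro h
      rw [a2.2 h]; ring


theorem exists_hom (p : ℕ) (hp : p.Prime) (hp3 : p ≠ 3) (k : Type) [Field k] [IsAlgClosed k] [CharP k p] :
    ∃ φ : EE →+* k, ∀ z : EE, φ z = z.re + z.im * φ ⟨0, 1⟩ := by
  have h3 : (3 : k) ≠ 0 := three_ne_zero_of p hp hp3
  have : NeZero ((3 : ℕ) : k) := ⟨by exact_mod_cast h3⟩
  obtain ⟨ζ, hζ⟩ := HasEnoughRootsOfUnity.exists_primitiveRoot k 3
  have h1 : (ζ - 1) * (ζ ^ 2 + ζ + 1) = 0 := by linear_combination hζ.pow_eq_one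
  have h2 : ζ ^ 2 + ζ + 1 = 0 := by
    rcases mul_eq_zero.1 h1 with h | h
    · exact absurd (sub_eq_zero.1 h) (hζ.ne_one (by norm_num))
    · exact h
  obtain ⟨φ, hφ⟩ := EE_hom ζ (by linear_combination h2)
  refine ⟨φ, fun z => ?_⟩
  have : φ ⟨0, 1⟩ = ζ := by rw [hφ]; simp
  rw [this, hφ]

def al (X Y : ℤ) : EE := ⟨19 * Y + 3 * X, 6 * X⟩

theorem al_norm (X Y : ℤ) : (al X Y).norm = 361 * Y ^ 2 + 27 * X ^ 2 := by
  rw [EE_norm, al]; ring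

/-- image of the element and its conjugate in terms of a root of -3 -/
theorem al_img {k : Type} [Field k] (φ : EE →+* k) :
    ∃ s : k, s ^ 2 = -3 ∧ s = 2 * φ ⟨0, 1⟩ + 1 ∧ ∀ X Y : ℤ, φ (al X Y) = 19 * Y + 3 * s * X ∧
      φ (star (al X Y)) = 19 * Y - 3 * s * X := by
  have e1 : ∀ X Y : ℤ, al X Y = 19 * (Y : EE) + 3 * (1 + 2 * ⟨0, 1⟩) * (X : EE) := by
    intro X Y; ext <;> simp [al]
  have e2 : ∀ X Y : ℤ, star (al X Y) = 19 * (Y : EE) - 3 * (1 + 2 * ⟨0, 1⟩) * (X : EE) := by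
    intro X Y; ext <;> simp [al] <;> ring
  refine ⟨φ (1 + 2 * ⟨0, 1⟩), ?_, ?_, ?_⟩
  · rw [← map_pow, show ((1 : EE) + 2 * ⟨0, 1⟩) ^ 2 = -3 by rw [pow_two]; ext <;> simp]
    rw [map_neg, map_ofNat]
  · simp only [map_add, map_mul, map_one, map_ofNat]; ring
  · intro X Y
    rw [e2, e1]
    simp only [map_add, map_sub, map_mul, map_intCast, map_ofNat]
    exact ⟨trivial, trivial⟩

theorem even_of_third (l : ℕ) (hl : l.Prime) (k : Type) [Field k] [CharP k l] (n : ℕ)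
    (h : l = 3 * n + 1 ∨ l + 1 = 3 * n) : (-1 : k) ^ n = 1 := by
  rcases hl.eq_two_or_odd with h2 | h2
  · subst h2
    rw [CharTwo.neg_eq, one_pow]
  · have : Even n := by rw [Nat.even_iff]; omega
    exact this.neg_one_pow

/-- if image of α is ± its conjugate in char ℓ then the symbol is trivial -/
theorem X_eq_one (l : ℕ) [hl : Fact l.Prime] (hl3 : l ≠ 3) (α : EE) (X : ℤ →* EE) (hX : Recip α X)
    (hN : ¬ (l : ℤ) ∣ α.norm) (h3 : X l ^ 3 = 1)
    (h : ∀ (k : Type) [Field k] [CharP k l] (φ : EE →+* k), φ (star α) = φ α ∨ φ (star α) = - φ α) :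
    X l = 1 := by
  obtain ⟨φ, -⟩ := exists_hom l hl.out hl3 (AlgebraicClosure (ZMod l))
  have hα : φ α ≠ 0 := by
    intro h0
    have := congrArg φ (EE_mul_star α)
    rw [map_mul, h0, zero_mul, map_intCast] at this
    exact hN ((CharP.intCast_eq_zero_iff (AlgebraicClosure (ZMod l)) l _).1 this.symm)
  have hs : ∀ n : ℕ, (l = 3 * n + 1 ∨ l + 1 = 3 * n) → φ (star α) ^ n = φ α ^ n := by
    intro n hn
    rcases h _ φ with h | h
    · rw [h]
    · rw [h, neg_pow, even_of_third l hl.out _ n hn, one_mul]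
  apply cube_root_eq_one (three_ne_zero_of l hl.out hl3) φ h3
  have hr := hX l hl3 hN _ φ
  have hmod : l % 3 = 1 ∨ l % 3 = 2 := by
    have : ¬ 3 ∣ l := fun h => hl3 ((Nat.prime_dvd_prime_iff_eq Nat.prime_three hl.out).1 h).symm
    omega
  rcases hmod with hm | hm
  · have := hr.1 hm
    rw [hs _ (by omega)] at this
    exact mul_right_cancel₀ (pow_ne_zero _ hα) (by rw [one_mul]; exact this.symm)
  · have := hr.2 hm
    rw [hs _ (by omega)] at this
    exact mul_right_cancel₀ (pow_ne_zero _ hα) (by rw [one_mul]; exact this.symm)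

theorem symbol (p m : ℕ) (X Y : ℤ) (hpm : (m * p : ℤ) = X ^ 2 + 11 * Y ^ 2)
    (hc : IsCoprime X Y) (hY : ¬ 3 ∣ Y) (hodd : (m * p : ℤ) % 2 = 1) :
    ∃ S : ℤ →* EE, Recip (al X Y) S ∧ S p * S m = 1 ∧ IsCoprime (m * p : ℤ) (al X Y).norm ∧
      (∀ n : ℤ, IsCoprime n (al X Y).norm → S n ^ 3 = 1) := by
  have hpos := EE_norm_nonneg (al X Y)
  obtain ⟨N, hN⟩ : ∃ N : ℕ, (al X Y).norm = N := ⟨(al X Y).norm.toNat, by omega⟩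
  obtain ⟨S, h1, h2, h3⟩ := gen_recip N (al X Y) hN (by simp only [al]; omega) (by simp only [al]; omega)
  have hn := al_norm X Y
  have hn2 : (al X Y).norm = 64 * Y ^ 2 + 27 * (m * p) := by rw [hn, hpm]; ring
  have h3Y : IsCoprime (3 : ℤ) Y := (Int.prime_three.coprime_iff_not_dvd).2 hY
  have c2 : IsCoprime (2 : ℤ) (al X Y).norm := by
    rw [Int.prime_two.coprime_iff_not_dvd, hn2]; omega
  have c3 : IsCoprime (3 : ℤ) (al X Y).norm := by
    rw [Int.prime_three.coprime_iff_not_dvd, hn2]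
    intro h
    have : (3 : ℤ) ∣ Y ^ 2 := by omega
    exact hY (Int.prime_three.dvd_of_dvd_pow this)
  have cY : IsCoprime Y (al X Y).norm := by
    have : IsCoprime Y (27 * X ^ 2) := by
      apply IsCoprime.mul_right
      · rw [show (27 : ℤ) = 3 ^ 3 by norm_num]; exact h3Y.symm.pow_right
      · exact hc.symm.pow_right
    rw [hn, show 361 * Y ^ 2 + 27 * X ^ 2 = 27 * X ^ 2 + Y * (361 * Y) by ring]
    exact this.add_mul_left_right _
  have cmp : IsCoprime (m * p : ℤ) (al X Y).norm := by
    rw [hn2, show 64 * Y ^ 2 + 27 * (m * p : ℤ) = 64 * Y ^ 2 + (m * p) * 27 by ring]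
    apply IsCoprime.add_mul_left_right
    apply IsCoprime.mul_right
    · rw [show (64 : ℤ) = 2 ^ 6 by norm_num]
      apply IsCoprime.pow_right
      apply IsCoprime.symm
      rw [Int.prime_two.coprime_iff_not_dvd]; omega
    · apply IsCoprime.pow_right
      rw [hpm, show X ^ 2 + 11 * Y ^ 2 = X ^ 2 + Y * (11 * Y) by ring]
      exact IsCoprime.add_mul_left_left hc.pow_left _
  -- primes dividing Y
  have hnat : ∀ n : ℕ, (n : ℤ) ∣ Y → S n = 1 := by
    intro n
    induction n using Nat.recOnMul with
    | zero =>
      intro h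
      exfalso; apply hY
      rw [show Y = 0 by simpa using h]; simp
    | one => intro _; simp
    | prime l hl =>
      intro hd
      have : Fact l.Prime := ⟨hl⟩
      have cl := cY.of_isCoprime_of_dvd_left hd
      apply X_eq_one l (by rintro rfl; exact hY hd) (al X Y) S h3 _ (h2 _ cl)
      · intro k _ _ φ
        right
        obtain ⟨s, hs, -, hi⟩ := al_img φ
        have hY0 : (Y : k) = 0 := (CharP.intCast_eq_zero_iff k l _).2 hd
        rw [(hi X Y).1, (hi X Y).2, hY0]; ring
      · intro hdd
        exact (Nat.prime_iff_prime_int.1 hl).not_isUnit (cl.isUnit_of_dvd' dvd_rfl hdd)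
    | mul a b iha ihb =>
      intro hd
      push_cast at hd ⊢
      rw [map_mul, iha ((Dvd.intro _ rfl).trans hd), ihb ((Dvd.intro_left _ rfl).trans hd), one_mul]
  have Sm1 : S (-1) = 1 := by
    have := h2 (-1) (by simpa using (isCoprime_one_left (x := (al X Y).norm)).neg_left)
    rw [← map_pow] at this
    simpa using this
  have SY : S Y = 1 := by
    rcases Int.natAbs_eq Y with h | h
    · rw [h]; exact hnat _ (by simp)
    · rw [h, ← neg_one_mul (Y.natAbs : ℤ), map_mul, Sm1, one_mul]; exact hnat _ (by simp)
  have S27 : S 27 = 1 := by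
    have := h2 3 c3
    rw [← map_pow] at this
    norm_num at this; exact this
  have S64 : S 64 = 1 := by
    have := h2 4 (by rw [show (4 : ℤ) = 2 ^ 2 by norm_num]; exact c2.pow_left)
    rw [← map_pow] at this
    norm_num at this; exact this
  refine ⟨S, h3, ?_, cmp, h2⟩
  have := h1 (27 * (p * m)) (-1 * 64 * Y ^ 2) (by rw [hn2]; exact ⟨1, by ring⟩)
  rw [map_mul, map_mul, map_mul, map_mul, map_pow, SY, S27, S64, Sm1] at this
  simpa using this


theorem cardano {k : Type} [Field k] (h3 : (3 : k) ≠ 0) (c d v : k) (hcd : c * d = 4)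
    (hs : c ^ 3 + d ^ 3 = 38) (hv : v ^ 2 + v + 1 = 0) :
    (1 + c + d) / 3 + (1 + c * v + d * v ^ 2) / 3 + (1 + c * v ^ 2 + d * v) / 3 = 1 ∧
    (1 + c + d) / 3 * ((1 + c * v + d * v ^ 2) / 3) + (1 + c * v + d * v ^ 2) / 3 * ((1 + c * v ^ 2 + d * v) / 3)
      + (1 + c * v ^ 2 + d * v) / 3 * ((1 + c + d) / 3) = -1 ∧
    (1 + c + d) / 3 * ((1 + c * v + d * v ^ 2) / 3) * ((1 + c * v ^ 2 + d * v) / 3) = 1 := by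
  have hv2 : v ^ 2 = -1 - v := by linear_combination hv
  rw [hv2]
  refine ⟨?_, ?_, ?_⟩
  · field_simp; ring
  · field_simp
    linear_combination (-3) * hcd - (c ^ 2 + d ^ 2 - 2 * c * d) * hv
  · field_simp
    have e : (1 + c + d) * (1 + c * v + d * (-1 - v)) * (1 + c * (-1 - v) + d * v) = 1 + (c ^ 3 + d ^ 3) - 3 * (c * d) := by
      linear_combination (-(1 + c + d) * (c - d) ^ 2) * hv
    rw [e, hcd, hs]; norm_num

theorem roots (p : ℕ) [hpf : Fact p.Prime] (hp2 : p ≠ 2) (hp3 : p ≠ 3) (X Y : ℤ) (S : ℤ →* EE)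
    (hS : Recip (al X Y) S) (hS3 : S p ^ 3 = 1) (hN : ¬ (p : ℤ) ∣ (al X Y).norm)
    (hd : (p : ℤ) ∣ X ^ 2 + 11 * Y ^ 2) (hY : ¬ (p : ℤ) ∣ Y)
    (k : Type) [Field k] [IsAlgClosed k] [CharP k p] :
    ∃ a b c : k, a + b + c = 1 ∧ a * b + b * c + c * a = -1 ∧ a * b * c = 1 ∧
      (S p = 1 → a ^ p = a ∧ b ^ p = b ∧ c ^ p = c) ∧
      (S p ≠ 1 → a ^ p = b ∧ b ^ p = c ∧ c ^ p = a) := by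
  have hp := hpf.out
  have h3 : (3 : k) ≠ 0 := three_ne_zero_of p hp hp3
  have h2 : (2 : k) ≠ 0 := by
    intro h
    have : ((2 : ℕ) : k) = 0 := by exact_mod_cast h
    rw [CharP.cast_eq_zero_iff k p] at this
    exact hp2 ((Nat.prime_dvd_prime_iff_eq hp Nat.prime_two).1 this)
  have h4 : (4 : k) ≠ 0 := by
    rw [show (4 : k) = 2 * 2 by norm_num]; exact mul_ne_zero h2 h2
  obtain ⟨φ, hφ⟩ := exists_hom p hp hp3 k
  have hrec := hS p hp3 hN k φ
  obtain ⟨s, hs, hsw, hi⟩ := al_img φ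
  have hi1 := (hi X Y).1
  have hi2 := (hi X Y).2
  have hY0 : (Y : k) ≠ 0 := fun h => hY ((CharP.intCast_eq_zero_iff k p _).1 h)
  have hXY : (X : k) ^ 2 + 11 * (Y : k) ^ 2 = 0 := by
    have := (CharP.intCast_eq_zero_iff k p _).2 hd
    exact_mod_cast this
  set t : k := X / Y with ht
  have hXt : (X : k) = Y * t := by rw [ht]; field_simp
  have ht2 : t ^ 2 = -11 := by
    rw [hXt] at hXY
    apply mul_left_cancel₀ (pow_ne_zero 2 hY0)
    linear_combination hXY
  set z : k := 19 + 3 * s * t with hz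
  set z' : k := 19 - 3 * s * t with hz'
  have hzz : z * z' = 64 := by
    rw [hz, hz']; linear_combination (-9 * t ^ 2) * hs + 27 * ht2
  have h64 : (64 : k) ≠ 0 := by
    rw [show (64 : k) = 2 ^ 6 by norm_num]; exact pow_ne_zero _ h2
  have hz0 : z ≠ 0 := fun h => h64 (by rw [← hzz, h, zero_mul])
  have e1 : φ (al X Y) = Y * z := by rw [hi1, hXt, hz]; ring
  have e2 : φ (star (al X Y)) = Y * z' := by rw [hi2, hXt, hz']; ring
  have hint (n : ℤ) : (n : k) ^ p = n := by
    have := map_intCast (frobenius k p) n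
    rwa [frobenius_def] at this
  have hfz := EE_frob p φ (al X Y)
  rw [e1, e2, mul_pow, hint] at hfz
  rw [e1, e2] at hrec
  set χ := φ (S p) with hχ
  have hχ3 : χ ^ 3 = 1 := by rw [hχ, ← map_pow, hS3, map_one]
  obtain ⟨c, hc⟩ := IsAlgClosed.exists_pow_nat_eq z (n := 3) (by norm_num)
  have hc0 : c ≠ 0 := by rintro rfl; apply hz0; rw [← hc]; norm_num
  set d : k := 4 / c with hd'
  have hcd : c * d = 4 := by rw [hd']; field_simp
  have hd0 : d ≠ 0 := div_ne_zero h4 hc0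
  have hd3 : d ^ 3 = z' := by
    apply mul_left_cancel₀ hz0
    rw [hzz, ← hc, ← mul_pow, hcd]; norm_num
  have h4p : (4 : k) ^ p = 4 := by simpa using hint 4
  have h3p : (3 : k) ^ p = 3 := by simpa using hint 3
  have hcdp : c ^ p * d ^ p = 4 := by rw [← mul_pow, hcd, h4p]
  have hcp : (p % 3 = 1 → c ^ p = χ ^ 2 * c) ∧ (p % 3 = 2 → c ^ p = χ * d) := by
    constructor
    · intro hm
      obtain ⟨n, hn⟩ : ∃ n, p = 3 * n + 1 := ⟨p / 3, by omega⟩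
      have r1 := hrec.1 hm
      rw [show (p - 1) / 3 = n by omega, mul_pow, mul_pow] at r1
      have r2 : z ^ n = χ * z' ^ n := by
        apply mul_left_cancel₀ (pow_ne_zero n hY0)
        rw [r1]; ring
      have r3 : (z ^ n) ^ 3 = 1 := by
        have := mul_left_cancel₀ hY0 (hfz.1 hm)
        rw [hn, pow_succ] at this
        apply mul_right_cancel₀ hz0
        rw [one_mul, ← pow_mul, mul_comm n 3]; exact this
      have r4 : z ^ n * z' ^ n = 1 := by
        rw [← hc, ← hd3, ← pow_mul, ← pow_mul, ← mul_pow, hcd]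
        rw [hn, pow_succ] at h4p
        exact mul_right_cancel₀ h4 (by rw [h4p, one_mul])
      have r5 : (z ^ n) ^ 2 = χ := by
        calc (z ^ n) ^ 2 = z ^ n * z ^ n := by ring
          _ = χ * (z ^ n * z' ^ n) := by nth_rewrite 2 [r2]; ring
          _ = χ := by rw [r4, mul_one]
      rw [hn, pow_succ, pow_mul, hc, ← r5]
      linear_combination (- z ^ n * c) * r3
    · intro hm
      obtain ⟨n, hn⟩ : ∃ n, p + 1 = 3 * n := ⟨p / 3 + 1, by omega⟩
      have r1 := hrec.2 hm
      rw [show (p + 1) / 3 = n by omega, mul_pow, mul_pow] at r1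
      have r2 : z' ^ n = χ * z ^ n := by
        apply mul_left_cancel₀ (pow_ne_zero n hY0)
        rw [r1]; ring
      have r3 : (z ^ n) ^ 3 = 64 := by
        have := mul_left_cancel₀ hY0 (hfz.2 hm)
        rw [← pow_mul, mul_comm n 3, ← hn, pow_succ, this, mul_comm, hzz]
      have r4 : z ^ n * z' ^ n = 16 := by
        rw [← hc, ← hd3, ← pow_mul, ← pow_mul, ← mul_pow, hcd, ← hn, pow_succ, h4p]; norm_num
      have h16 : (16 : k) ≠ 0 := by
        rw [show (16 : k) = 2 ^ 4 by norm_num]; exact pow_ne_zero _ h2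
      have r5 : z ^ n = 4 * χ := by
        apply mul_left_cancel₀ h16
        calc 16 * z ^ n = z ^ n * (χ * z ^ n) * z ^ n := by rw [← r2, r4]
          _ = (z ^ n) ^ 3 * χ := by ring
          _ = 16 * (4 * χ) := by rw [r3]; ring
      have r6 : c ^ p * c = 4 * χ := by
        rw [← pow_succ, hn, pow_mul, hc, r5]
      apply mul_right_cancel₀ hc0
      rw [r6, ← hcd]; ring
  have hfr (v : k) (hv3 : v ^ 3 = 1) :
      ((1 + c * v + d * v ^ 2) / 3) ^ p = (1 + c * (χ ^ 2 * v) + d * (χ ^ 2 * v) ^ 2) / 3 := by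
    have hmod : p % 3 = 1 ∨ p % 3 = 2 := by
      have : ¬ 3 ∣ p := fun h => hp3 ((Nat.prime_dvd_prime_iff_eq Nat.prime_three hp).1 h).symm
      omega
    rw [div_pow, h3p, add_pow_char, add_pow_char, one_pow, mul_pow, mul_pow]
    congr 1
    rcases hmod with hm | hm
    · have hv : v ^ p = v := by
        rw [← Nat.div_add_mod p 3, hm, pow_add, pow_mul, hv3]; simp
      have hcp' := hcp.1 hm
      have hdp : d ^ p = χ * d := by
        apply mul_left_cancel₀ (pow_ne_zero p hc0)
        rw [hcdp, hcp']
        linear_combination (-4) * hχ3 - χ ^ 3 * hcd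
      rw [hcp', hdp, ← pow_mul, mul_comm 2 p, pow_mul, hv]
      linear_combination (-d * χ * v ^ 2) * hχ3
    · have hv : v ^ p = v ^ 2 := by
        rw [← Nat.div_add_mod p 3, hm, pow_add, pow_mul, hv3]; simp
      have hcp' := hcp.2 hm
      have hdp : d ^ p = χ ^ 2 * c := by
        apply mul_left_cancel₀ (pow_ne_zero p hc0)
        rw [hcdp, hcp']
        linear_combination (-4) * hχ3 - χ ^ 3 * hcd
      rw [hcp', hdp, ← pow_mul, mul_comm 2 p, pow_mul, hv]
      linear_combination (-d * χ * v ^ 2) * hχ3 + χ ^ 2 * c * v * hv3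
  have hsum : c ^ 3 + d ^ 3 = 38 := by rw [hc, hd3, hz, hz']; ring
  have hone := hfr 1 (by simp)
  simp only [mul_one, one_pow] at hone
  by_cases hS1 : S p = 1
  · have hχ1 : χ = 1 := by rw [hχ, hS1, map_one]
    set w := φ ⟨0, 1⟩ with hw
    have hww : w ^ 2 + w + 1 = 0 := by
      apply mul_left_cancel₀ h4
      rw [hsw] at hs
      linear_combination hs
    have hw3 : w ^ 3 = 1 := by linear_combination (w - 1) * hww
    obtain ⟨a1, a2, a3⟩ := cardano h3 c d w hcd hsum hww
    have b1 := hfr w hw3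
    have b2 := hfr (w ^ 2) (by rw [← pow_mul, mul_comm, pow_mul, hw3, one_pow])
    have hw4 : (w ^ 2) ^ 2 = w := by linear_combination w * hw3
    rw [hχ1] at hone b1 b2
    simp only [one_pow, one_mul, mul_one, hw4] at hone b1 b2
    exact ⟨_, _, _, a1, a2, a3, fun _ => ⟨hone, b1, b2⟩, fun h => absurd hS1 h⟩
  · have hχ1 : χ ≠ 1 := fun h => hS1 (cube_root_eq_one h3 φ hS3 h)
    have hχq : χ ^ 2 + χ + 1 = 0 := by
      have : (χ - 1) * (χ ^ 2 + χ + 1) = 0 := by linear_combination hχ3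
      exact (mul_eq_zero.1 this).resolve_left (sub_ne_zero.2 hχ1)
    set v := χ ^ 2 with hv
    have hvv : v ^ 2 = χ := by rw [hv]; linear_combination χ * hχ3
    have hv3 : v ^ 3 = 1 := by rw [hv, ← pow_mul, mul_comm, pow_mul, hχ3, one_pow]
    have hv4 : (v ^ 2) ^ 2 = v := by rw [hvv]
    obtain ⟨a1, a2, a3⟩ := cardano h3 c d v hcd hsum (by rw [hvv]; linear_combination hχq)
    have b1 := hfr v hv3
    have b2 := hfr (v ^ 2) (by rw [← pow_mul, mul_comm, pow_mul, hv3, one_pow])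
    rw [← pow_two, hv4] at b1
    rw [← pow_succ', hv3, hv4] at b2
    simp only [mul_one, one_pow] at b2
    exact ⟨_, _, _, a1, a2, a3, fun h => absurd h hS1, fun _ => ⟨hone, b1, b2⟩⟩


theorem T_formula {k : Type} [Field k] (T : ℕ → ℤ)
    (h1 : T 1 = 1) (h2 : T 2 = 1) (h3 : T 3 = 2)
    (hrec : ∀ n, 4 ≤ n → T n = T (n - 1) + T (n - 2) + T (n - 3))
    (a b c : k) (e1 : a + b + c = 1) (e2 : a * b + b * c + c * a = -1) (e3 : a * b * c = 1) (n : ℕ) :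
    ((a - b) * (b - c) * (c - a)) * (T (n + 1) : k) =
      -(a ^ (n + 2) * (b - c) + b ^ (n + 2) * (c - a) + c ^ (n + 2) * (a - b)) := by
  have ha : a ^ 3 = a ^ 2 + a + 1 := by
    linear_combination a ^ 2 * e1 - a * e2 + e3
  have hb : b ^ 3 = b ^ 2 + b + 1 := by
    linear_combination b ^ 2 * e1 - b * e2 + e3
  have hc : c ^ 3 = c ^ 2 + c + 1 := by
    linear_combination c ^ 2 * e1 - c * e2 + e3
  induction n using Nat.strong_induction_on with
  | _ n ih =>
    match n, ih with
    | 0, _ => rw [h1]; push_cast; ring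
    | 1, _ =>
      rw [h2]; push_cast
      linear_combination (-((a - b) * (b - c) * (c - a))) * e1
    | 2, _ =>
      rw [h3]; push_cast
      have : a ^ (2 + 2) * (b - c) + b ^ (2 + 2) * (c - a) + c ^ (2 + 2) * (a - b)
        = -((a - b) * (b - c) * (c - a)) * ((a + b + c) ^ 2 - (a * b + b * c + c * a)) := by ring
      rw [this, e1, e2]; ring
    | n + 3, ih =>
      have i1 := ih n (by omega)
      have i2 := ih (n + 1) (by omega)
      have i3 := ih (n + 2) (by omega)
      have hr := hrec (n + 3 + 1) (by omega)
      rw [show n + 3 + 1 - 1 = n + 2 + 1 by omega, show n + 3 + 1 - 2 = n + 1 + 1 by omega,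
        show n + 3 + 1 - 3 = n + 1 by omega] at hr
      rw [hr]; push_cast
      rw [mul_add, mul_add, i1, i2, i3]
      have ea : a ^ (n + 3 + 2) = a ^ (n + 2) * (a ^ 2 + a + 1) := by rw [← ha]; ring
      have eb : b ^ (n + 3 + 2) = b ^ (n + 2) * (b ^ 2 + b + 1) := by rw [← hb]; ring
      have ec : c ^ (n + 3 + 2) = c ^ (n + 2) * (c ^ 2 + c + 1) := by rw [← hc]; ring
      rw [ea, eb, ec]; ring

theorem disc_eq {k : Type} [Field k]
    (a b c : k) (e1 : a + b + c = 1) (e2 : a * b + b * c + c * a = -1) (e3 : a * b * c = 1) :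
    ((a - b) * (b - c) * (c - a)) ^ 2 = -44 := by
  have : ((a - b) * (b - c) * (c - a)) ^ 2 = (a + b + c) ^ 2 * (a * b + b * c + c * a) ^ 2
    - 4 * (a * b + b * c + c * a) ^ 3 - 4 * (a + b + c) ^ 3 * (a * b * c)
    + 18 * (a + b + c) * (a * b + b * c + c * a) * (a * b * c) - 27 * (a * b * c) ^ 2 := by ring
  rw [this, e1, e2, e3]; norm_num

theorem nat_ne_zero (p : ℕ) (hp : p.Prime) (k : Type) [Field k] [CharP k p] (n : ℕ) (h : ¬ p ∣ n) :
    (n : k) ≠ 0 := fun h' => h ((CharP.cast_eq_zero_iff k p n).1 h')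

theorem T_fixed {k : Type} [Field k] (p : ℕ) (hp : p.Prime) [CharP k p] (hp2 : p ≠ 2) (hp11 : p ≠ 11)
    (T : ℕ → ℤ) (h1 : T 1 = 1) (h2 : T 2 = 1) (h3 : T 3 = 2)
    (hrec : ∀ n, 4 ≤ n → T n = T (n - 1) + T (n - 2) + T (n - 3))
    (a b c : k) (e1 : a + b + c = 1) (e2 : a * b + b * c + c * a = -1) (e3 : a * b * c = 1)
    (h : a ^ p = a ∧ b ^ p = b ∧ c ^ p = c) : (p : ℤ) ∣ T (p - 1) := by
  have hp1 := hp.two_le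
  have := T_formula T h1 h2 h3 hrec a b c e1 e2 e3 (p - 2)
  rw [show p - 2 + 1 = p - 1 by omega, show p - 2 + 2 = p by omega, h.1, h.2.1, h.2.2] at this
  have hD : (a - b) * (b - c) * (c - a) ≠ 0 := by
    intro hD
    have h44 := disc_eq a b c e1 e2 e3
    rw [hD] at h44
    refine nat_ne_zero p hp k 44 ?_ ?_
    · intro hd
      rw [show 44 = 2 * 2 * 11 by norm_num, hp.dvd_mul, hp.dvd_mul,
        Nat.prime_dvd_prime_iff_eq hp Nat.prime_two, Nat.prime_dvd_prime_iff_eq hp (by norm_num)] at hd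
      tauto
    · push_cast; linear_combination h44
  rw [← CharP.intCast_eq_zero_iff k p]
  apply mul_left_cancel₀ hD
  rw [this]; ring

theorem T_cyc {k : Type} [Field k] (p : ℕ) (hp : p.Prime) [CharP k p] (hp2 : p ≠ 2)
    (T : ℕ → ℤ) (h1 : T 1 = 1) (h2 : T 2 = 1) (h3 : T 3 = 2)
    (hrec : ∀ n, 4 ≤ n → T n = T (n - 1) + T (n - 2) + T (n - 3))
    (a b c : k) (e1 : a + b + c = 1) (e2 : a * b + b * c + c * a = -1) (e3 : a * b * c = 1)
    (h : a ^ p = b ∧ b ^ p = c ∧ c ^ p = a) : ¬ (p : ℤ) ∣ T (p - 1) := by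
  have hp1 := hp.two_le
  have := T_formula T h1 h2 h3 hrec a b c e1 e2 e3 (p - 2)
  rw [show p - 2 + 1 = p - 1 by omega, show p - 2 + 2 = p by omega, h.1, h.2.1, h.2.2] at this
  intro hd
  rw [(CharP.intCast_eq_zero_iff k p _).2 hd] at this
  refine nat_ne_zero p hp k 4 ?_ ?_
  · intro hd
    rw [show 4 = 2 * 2 by norm_num, hp.dvd_mul,
        Nat.prime_dvd_prime_iff_eq hp Nat.prime_two] at hd
    tauto
  · push_cast; linear_combination this - (a + b + c + 1) * e1 + 3 * e2

theorem exists_roots (p : ℕ) (hp : p.Prime) (hp2 : p ≠ 2) (hp3 : p ≠ 3)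
    (k : Type) [Field k] [IsAlgClosed k] [CharP k p] :
    ∃ a b c : k, a + b + c = 1 ∧ a * b + b * c + c * a = -1 ∧ a * b * c = 1 := by
  have h2 : (2 : k) ≠ 0 := by
    have := nat_ne_zero p hp k 2 (fun h => hp2 ((Nat.prime_dvd_prime_iff_eq hp Nat.prime_two).1 h))
    exact_mod_cast this
  have h3 : (3 : k) ≠ 0 := three_ne_zero_of p hp hp3
  obtain ⟨s, hs⟩ := IsAlgClosed.exists_pow_nat_eq (-3 : k) (n := 2) (by norm_num)
  obtain ⟨t, ht⟩ := IsAlgClosed.exists_pow_nat_eq (-11 : k) (n := 2) (by norm_num)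
  obtain ⟨c, hc⟩ := IsAlgClosed.exists_pow_nat_eq (19 + 3 * s * t : k) (n := 3) (by norm_num)
  have hzz : (19 + 3 * s * t) * (19 - 3 * s * t) = 64 := by
    linear_combination (-9 * t ^ 2) * hs + 27 * ht
  have h64 : (64 : k) ≠ 0 := by
    rw [show (64 : k) = 2 ^ 6 by norm_num]; exact pow_ne_zero _ h2
  have hz0 : 19 + 3 * s * t ≠ 0 := fun h => h64 (by rw [← hzz, h, zero_mul])
  have hc0 : c ≠ 0 := by rintro rfl; apply hz0; rw [← hc]; norm_num
  have hcd : c * (4 / c) = 4 := by field_simp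
  have hd3 : (4 / c) ^ 3 = 19 - 3 * s * t := by
    apply mul_left_cancel₀ hz0
    rw [hzz, ← hc, ← mul_pow, hcd]; norm_num
  obtain ⟨a1, a2, a3⟩ := cardano h3 c (4 / c) ((s - 1) / 2) hcd (by rw [hc, hd3]; ring)
    (by field_simp; linear_combination hs)
  exact ⟨_, _, _, a1, a2, a3⟩

theorem sq_of_dvd (p : ℕ) [hpf : Fact p.Prime] (hp2 : p ≠ 2) (hp3 : p ≠ 3) (hp11 : p ≠ 11) (hp19 : p ≠ 19)
    (T : ℕ → ℤ) (h1 : T 1 = 1) (h2 : T 2 = 1) (h3 : T 3 = 2)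
    (hrec : ∀ n, 4 ≤ n → T n = T (n - 1) + T (n - 2) + T (n - 3))
    (hT : (p : ℤ) ∣ T (p - 1)) : IsSquare (-11 : ZMod p) := by
  have hp := hpf.out
  let k := AlgebraicClosure (ZMod p)
  have : CharP k p := charP_of_injective_algebraMap (algebraMap (ZMod p) k).injective p
  obtain ⟨a, b, c, e1, e2, e3⟩ := exists_roots p hp hp2 hp3 k
  have hD2 := disc_eq a b c e1 e2 e3
  have h44 : (44 : k) ≠ 0 := by
    have := nat_ne_zero p hp k 44 (by
      intro hd
      rw [show 44 = 2 * 2 * 11 by norm_num, hp.dvd_mul, hp.dvd_mul,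
        Nat.prime_dvd_prime_iff_eq hp Nat.prime_two, Nat.prime_dvd_prime_iff_eq hp (by norm_num)] at hd
      tauto)
    exact_mod_cast this
  have h38 : (38 : k) ≠ 0 := by
    have := nat_ne_zero p hp k 38 (by
      intro hd
      rw [show 38 = 2 * 19 by norm_num, hp.dvd_mul,
        Nat.prime_dvd_prime_iff_eq hp Nat.prime_two, Nat.prime_dvd_prime_iff_eq hp (by norm_num)] at hd
      tauto)
    exact_mod_cast this
  set D := (a - b) * (b - c) * (c - a) with hD
  have hD0 : D ≠ 0 := by intro h; rw [h] at hD2; apply h44; linear_combination hD2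
  have hp1 := hp.two_le
  have hsum := T_formula T h1 h2 h3 hrec a b c e1 e2 e3 (p - 2)
  rw [show p - 2 + 1 = p - 1 by omega, show p - 2 + 2 = p by omega,
    (CharP.intCast_eq_zero_iff k p _).2 hT] at hsum
  have hab : a - b ≠ 0 := by intro h; apply hD0; rw [hD, h]; ring
  have hbc : b - c ≠ 0 := by intro h; apply hD0; rw [hD, h]; ring
  have hca : c - a ≠ 0 := by intro h; apply hD0; rw [hD, h]; ring
  have E1 : a ^ p + b ^ p + c ^ p = 1 := by rw [← add_pow_char, ← add_pow_char, e1, one_pow]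
  have hm1 : (-1 : k) ^ p = -1 := by
    have := map_intCast (frobenius k p) (-1)
    rw [frobenius_def] at this
    exact_mod_cast this
  have E2 : a ^ p * b ^ p + b ^ p * c ^ p + c ^ p * a ^ p = -1 := by
    rw [← mul_pow, ← mul_pow, ← mul_pow, ← add_pow_char, ← add_pow_char, e2, hm1]
  have E3 : a ^ p * b ^ p * c ^ p = 1 := by rw [← mul_pow, ← mul_pow, e3, one_pow]
  have key (x : k) (hx : x ^ 3 = x ^ 2 + x + 1) : x = a ∨ x = b ∨ x = c := by
    have : (x - a) * ((x - b) * (x - c)) = 0 := by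
      linear_combination hx - x ^ 2 * e1 + x * e2 - e3
    rcases mul_eq_zero.1 this with h | h
    · left; exact sub_eq_zero.1 h
    rcases mul_eq_zero.1 h with h | h
    · right; left; exact sub_eq_zero.1 h
    · right; right; exact sub_eq_zero.1 h
  have c38 (x : k) (hx : x ^ 3 = x ^ 2 + x + 1) : 3 * x ≠ 1 := by
    intro h
    apply h38
    have e : 27 * (x ^ 3 - x ^ 2 - x - 1) = (3 * x) ^ 3 - 3 * (3 * x) ^ 2 - 9 * (3 * x) - 27 := by ring
    rw [h, hx] at e
    linear_combination e
  have ra : a ^ 3 = a ^ 2 + a + 1 := by linear_combination a ^ 2 * e1 - a * e2 + e3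
  have rb : b ^ 3 = b ^ 2 + b + 1 := by linear_combination b ^ 2 * e1 - b * e2 + e3
  have rc : c ^ 3 = c ^ 2 + c + 1 := by linear_combination c ^ 2 * e1 - c * e2 + e3
  have hpa := key (a ^ p) (by linear_combination (a ^ p) ^ 2 * E1 - a ^ p * E2 + E3)
  have hpb := key (b ^ p) (by linear_combination (b ^ p) ^ 2 * E1 - b ^ p * E2 + E3)
  have hDp : D ^ p = (a ^ p - b ^ p) * (b ^ p - c ^ p) * (c ^ p - a ^ p) := by
    rw [hD, mul_pow, mul_pow, sub_pow_char, sub_pow_char, sub_pow_char]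
  have hne : a ^ p ≠ b ^ p := by
    intro h; apply hD0
    rw [h, sub_self, zero_mul, zero_mul] at hDp
    exact pow_eq_zero_iff (hp.ne_zero) |>.1 hDp
  have hcp : c ^ p = 1 - a ^ p - b ^ p := by linear_combination E1
  have hDD : D ^ p = D := by
    rw [hDp]
    rw [hcp] at hsum ⊢
    have hc' : c = 1 - a - b := by linear_combination e1
    rcases hpa with ha | ha | ha <;> rcases hpb with hb | hb | hb <;> rw [ha, hb] at hne hsum ⊢
    · exact absurd rfl hne
    · rw [hD, hc']
    · exfalso
      apply c38 a ra
      apply mul_right_cancel₀ hbc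
      linear_combination hsum + (a - c) * e1
    · exfalso
      apply c38 c rc
      apply mul_right_cancel₀ hab
      linear_combination hsum + (2 * (a - b)) * e1
    · exact absurd rfl hne
    · rw [hD, hc']; ring
    · rw [hD, hc']; ring
    · exfalso
      apply c38 b rb
      apply mul_right_cancel₀ hca
      linear_combination hsum + (c - b) * e1
    · exact absurd rfl hne
  obtain ⟨n, hn⟩ : ∃ n, p = 2 * n + 1 := hp.odd_of_ne_two hp2
  have h44n : (-44 : ZMod p) ^ (p / 2) = 1 := by
    apply (algebraMap (ZMod p) k).injective
    rw [map_pow, map_neg, map_ofNat, map_one, ← hD2, show p / 2 = n by omega, ← pow_mul]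
    apply mul_right_cancel₀ hD0
    rw [← pow_succ, ← hn, hDD, one_mul]
  have hz : (-44 : ZMod p) ≠ 0 := by
    intro h
    apply h44
    have := congrArg (algebraMap (ZMod p) k) h
    rw [map_neg, map_ofNat, map_zero] at this
    linear_combination -this
  obtain ⟨r, hr⟩ := (ZMod.euler_criterion p hz).2 h44n
  have h2' : (2 : ZMod p) ≠ 0 := by
    intro h
    apply hz
    linear_combination (-22) * h
  refine ⟨r / 2, ?_⟩
  field_simp
  linear_combination hr


theorem reduce (p : ℕ) (hp : p.Prime) (hp2 : p ≠ 2) (hp7 : p ≠ 7) (X Y m : ℤ) (h : X ^ 2 + 11 * Y ^ 2 = m * p) (hm0 : 0 < m)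
    (hm : m < 12) : (∃ x y : ℤ, (p : ℤ) = x ^ 2 + 11 * y ^ 2) ∨
      ∃ x y : ℤ, (p : ℤ) = 3 * x ^ 2 + 2 * x * y + 4 * y ^ 2 := by
  have hodd : (p : ℤ) % 2 = 1 := by
    have := hp.eq_two_or_odd
    omega
  have s4 (Z : ℤ) : Z % 2 = 0 ∧ Z ^ 2 % 4 = 0 ∨ Z % 2 = 1 ∧ Z ^ 2 % 8 = 1 := by
    have : Z % 8 = 0 ∨ Z % 8 = 1 ∨ Z % 8 = 2 ∨ Z % 8 = 3 ∨ Z % 8 = 4 ∨ Z % 8 = 5 ∨ Z % 8 = 6 ∨ Z % 8 = 7 := by omega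
    have e8 : Z ^ 2 % 8 = (Z % 8) ^ 2 % 8 := by simp [pow_two, Int.mul_emod]
    rcases this with h | h | h | h | h | h | h | h <;> rw [h] at e8 <;> norm_num at e8 <;> omega
  have no2 (X Y : ℤ) (n : ℤ) (hn : n % 2 = 1) (h : X ^ 2 + 11 * Y ^ 2 = 2 * n) : False := by
    have := s4 X
    have := s4 Y
    generalize X ^ 2 = A at *
    generalize Y ^ 2 = B at *
    omega
  have s4X := s4 X
  have s4Y := s4 Y
  interval_cases m
  · left; exact ⟨X, Y, by linarith⟩
  · exact (no2 X Y p hodd h).elim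
  · right
    have : (X - Y) % 3 = 0 ∨ (X + Y) % 3 = 0 := by
      have e : (X - Y) * (X + Y) = 3 * (p - 4 * Y ^ 2) := by linear_combination h
      have := Int.prime_three.dvd_or_dvd (Dvd.intro _ e.symm)
      omega
    rcases this with h' | h'
    · obtain ⟨x, hx⟩ := Int.dvd_of_emod_eq_zero h'
      refine ⟨x, Y, ?_⟩
      have hX : X = 3 * x + Y := by linarith
      rw [hX] at h; linarith
    · obtain ⟨x, hx⟩ := Int.dvd_of_emod_eq_zero h'
      refine ⟨x, -Y, ?_⟩
      have hX : X = 3 * x - Y := by linarith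
      rw [hX] at h; linarith
  · by_cases hpar : X % 2 = 0 ∧ Y % 2 = 0
    · left
      obtain ⟨x, hx⟩ := Int.dvd_of_emod_eq_zero hpar.1
      obtain ⟨y, hy⟩ := Int.dvd_of_emod_eq_zero hpar.2
      refine ⟨x, y, ?_⟩
      rw [hx, hy] at h; linarith
    · right
      have hh : X % 2 = 1 ∧ Y % 2 = 1 := by
        generalize X ^ 2 = A at *
        generalize Y ^ 2 = B at *
        omega
      have : (X - Y) % 4 = 0 ∨ (X + Y) % 4 = 0 := by omega
      rcases this with h' | h'
      · obtain ⟨x, hx⟩ := Int.dvd_of_emod_eq_zero h'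
        refine ⟨Y, x, ?_⟩
        have hX : X = 4 * x + Y := by linarith
        rw [hX] at h; linarith
      · obtain ⟨x, hx⟩ := Int.dvd_of_emod_eq_zero h'
        refine ⟨-Y, x, ?_⟩
        have hX : X = 4 * x - Y := by linarith
        rw [hX] at h; linarith
  · right
    have : (X - 2 * Y) % 5 = 0 ∨ (X + 2 * Y) % 5 = 0 := by
      have e : (X - 2 * Y) * (X + 2 * Y) = 5 * (p - 3 * Y ^ 2) := by linear_combination h
      have := (show Prime (5 : ℤ) by norm_num).dvd_or_dvd (Dvd.intro _ e.symm)
      omega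
    rcases this with h' | h'
    · obtain ⟨x, hx⟩ := Int.dvd_of_emod_eq_zero h'
      refine ⟨Y + x, -x, ?_⟩
      have hX : X = 5 * x + 2 * Y := by linarith
      rw [hX] at h; linarith
    · obtain ⟨x, hx⟩ := Int.dvd_of_emod_eq_zero h'
      refine ⟨-Y + x, -x, ?_⟩
      have hX : X = 5 * x - 2 * Y := by linarith
      rw [hX] at h; linarith
  · exact (no2 X Y (3 * p) (by omega) (by linarith)).elim
  · exfalso
    have hmod : X % 7 = 0 ∧ Y % 7 = 0 := by
      have e : (X ^ 2 + 11 * Y ^ 2) % 7 = 0 := by rw [h]; omega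
      have e7 : (X ^ 2 + 11 * Y ^ 2) % 7 = ((X % 7) ^ 2 + 11 * (Y % 7) ^ 2) % 7 := by
        simp [Int.add_emod, Int.mul_emod, pow_two]
      rw [e] at e7
      have hx0 : 0 ≤ X % 7 := by omega
      have hx1 : X % 7 < 7 := by omega
      have hy0 : 0 ≤ Y % 7 := by omega
      have hy1 : Y % 7 < 7 := by omega
      generalize X % 7 = A at *
      generalize Y % 7 = B at *
      interval_cases A <;> interval_cases B <;> simp at e7 ⊢
    obtain ⟨x, hx⟩ := Int.dvd_of_emod_eq_zero hmod.1
    obtain ⟨y, hy⟩ := Int.dvd_of_emod_eq_zero hmod.2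
    have : (7 : ℤ) ∣ p := ⟨x ^ 2 + 11 * y ^ 2, by rw [hx, hy] at h; linarith⟩
    have : 7 ∣ p := by exact_mod_cast this
    exact hp7 ((Nat.prime_dvd_prime_iff_eq (by norm_num) hp).1 this).symm
  · exfalso
    have hh : X % 2 = 0 ∧ Y % 2 = 0 := by
      generalize X ^ 2 = A at *
      generalize Y ^ 2 = B at *
      omega
    obtain ⟨x, hx⟩ := Int.dvd_of_emod_eq_zero hh.1
    obtain ⟨y, hy⟩ := Int.dvd_of_emod_eq_zero hh.2
    refine no2 x y p hodd ?_
    rw [hx, hy] at h; linarith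
  · have e : (X - 4 * Y) * (X + 4 * Y) = 9 * (p - 3 * Y ^ 2) := by linear_combination h
    by_cases h3 : X % 3 = 0 ∧ Y % 3 = 0
    · left
      obtain ⟨x, hx⟩ := Int.dvd_of_emod_eq_zero h3.1
      obtain ⟨y, hy⟩ := Int.dvd_of_emod_eq_zero h3.2
      refine ⟨x, y, ?_⟩
      rw [hx, hy] at h; linarith
    · right
      have : (X - 4 * Y) % 9 = 0 ∨ (X + 4 * Y) % 9 = 0 := by
        by_cases hc1 : (X - 4 * Y) % 3 = 0
        · have hc2 : ¬ (3 : ℤ) ∣ (X + 4 * Y) := by omega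
          left
          apply Int.emod_eq_zero_of_dvd
          have hcop : IsCoprime (9 : ℤ) (X + 4 * Y) := by
            rw [show (9 : ℤ) = 3 ^ 2 by norm_num]
            exact ((Int.prime_three.coprime_iff_not_dvd).2 hc2).pow_left
          exact hcop.dvd_of_dvd_mul_right (Dvd.intro _ e.symm)
        · right
          apply Int.emod_eq_zero_of_dvd
          have hc2 : ¬ (3 : ℤ) ∣ (X - 4 * Y) := by omega
          have hcop : IsCoprime (9 : ℤ) (X - 4 * Y) := by
            rw [show (9 : ℤ) = 3 ^ 2 by norm_num]
            exact ((Int.prime_three.coprime_iff_not_dvd).2 hc2).pow_left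
          exact hcop.dvd_of_dvd_mul_left (Dvd.intro _ e.symm)
      rcases this with h' | h'
      · obtain ⟨x, hx⟩ := Int.dvd_of_emod_eq_zero h'
        refine ⟨Y + x, x, ?_⟩
        have hX : X = 9 * x + 4 * Y := by linarith
        rw [hX] at h; linarith
      · obtain ⟨x, hx⟩ := Int.dvd_of_emod_eq_zero h'
        refine ⟨-Y + x, x, ?_⟩
        have hX : X = 9 * x - 4 * Y := by linarith
        rw [hX] at h; linarith
  · exact (no2 X Y (5 * p) (by omega) (by linarith)).elim
  · left
    have : (11 : ℤ) ∣ X := by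
      have e : X ^ 2 = 11 * (p - Y ^ 2) := by linear_combination h
      exact (show Prime (11 : ℤ) by norm_num).dvd_of_dvd_pow (Dvd.intro _ e.symm)
    obtain ⟨x, hx⟩ := this
    refine ⟨Y, x, ?_⟩
    rw [hx] at h; linarith

theorem thue (p : ℕ) [hpf : Fact p.Prime] (hsq : IsSquare (-11 : ZMod p)) :
    ∃ X Y m : ℤ, X ^ 2 + 11 * Y ^ 2 = m * p ∧ 0 < m ∧ m < 12 := by
  have hp := hpf.out
  obtain ⟨r, hr⟩ := hsq
  set n := Nat.sqrt p with hn
  have hn1 : n * n ≤ p := Nat.sqrt_le p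
  have hn2 : p < (n + 1) * (n + 1) := Nat.lt_succ_sqrt p
  have hnlt : n * n < p := by
    refine lt_of_le_of_ne hn1 ?_
    intro h
    rw [← h] at hp
    exact Nat.not_prime_mul (by rintro h1; rw [h1] at hp; simp [Nat.not_prime_one] at hp) (by rintro h1; rw [h1] at hp; simp [Nat.not_prime_one] at hp) hp
  let f : Fin (n + 1) × Fin (n + 1) → ZMod p := fun u => (u.1 : ℕ) - r * (u.2 : ℕ)
  obtain ⟨u, v, huv, hf⟩ := Fintype.exists_ne_map_eq_of_card_lt f (by
    simp only [ZMod.card, Fintype.card_prod, Fintype.card_fin]; exact hn2)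
  have hu1 := u.1.2
  have hu2 := u.2.2
  have hv1 := v.1.2
  have hv2 := v.2.2
  have hb (a b : ℕ) (ha : a < n + 1) (hb : b < n + 1) : ((a : ℤ) - b) ^ 2 ≤ n * n := by
    have : |(a : ℤ) - b| ≤ |(n : ℤ)| := by rw [abs_le, abs_of_nonneg (by positivity)]; omega
    have := sq_le_sq.2 this
    nlinarith
  have b1 := hb u.1 v.1 hu1 hv1
  have b2 := hb u.2 v.2 hu2 hv2
  set X : ℤ := (u.1 : ℕ) - (v.1 : ℕ) with hX
  set Y : ℤ := (u.2 : ℕ) - (v.2 : ℕ) with hY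
  have hd : (p : ℤ) ∣ X ^ 2 + 11 * Y ^ 2 := by
    rw [← ZMod.intCast_zmod_eq_zero_iff_dvd]
    have hXr : (X : ZMod p) = r * Y := by
      simp only [f] at hf
      rw [hX, hY]; push_cast
      linear_combination hf
    push_cast
    rw [hXr]
    linear_combination (-(Y : ZMod p) ^ 2) * hr
  obtain ⟨m, hm⟩ := hd
  have hpos : 0 < X ^ 2 + 11 * Y ^ 2 := by
    by_contra hcon
    have hX0 : X = 0 := by nlinarith [sq_nonneg X, sq_nonneg Y]
    have hY0 : Y = 0 := by nlinarith [sq_nonneg X, sq_nonneg Y]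
    apply huv
    ext <;> omega
  have hp0 : (0 : ℤ) < p := by exact_mod_cast hp.pos
  have hnlt' : (n : ℤ) * n < p := by exact_mod_cast hnlt
  refine ⟨X, Y, m, by rw [hm]; ring, ?_, ?_⟩
  · rw [hm] at hpos
    exact pos_of_mul_pos_right hpos hp0.le
  · by_contra hcon
    push Not at hcon
    nlinarith


theorem final (p m : ℕ) [hpf : Fact p.Prime] (hp2 : p ≠ 2) (hp3 : p ≠ 3) (hp11 : p ≠ 11)
    (X Y : ℤ) (hpm : (m * p : ℤ) = X ^ 2 + 11 * Y ^ 2)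
    (hsf : Squarefree m) (hcop : m.Coprime p) (hY : ¬ 3 ∣ Y) (hodd : m % 2 = 1)
    (T : ℕ → ℤ) (h1 : T 1 = 1) (h2 : T 2 = 1) (h3 : T 3 = 2)
    (hrec : ∀ n, 4 ≤ n → T n = T (n - 1) + T (n - 2) + T (n - 3)) :
    ∃ S : ℤ →* EE, Recip (al X Y) S ∧ IsCoprime (m : ℤ) (al X Y).norm ∧ S m ^ 3 = 1 ∧
      (S m = 1 → (p : ℤ) ∣ T (p - 1)) ∧ (S m ≠ 1 → ¬ (p : ℤ) ∣ T (p - 1)) := by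
  have hp := hpf.out
  have hsq : Squarefree ((m * p : ℕ) : ℤ) :=
    Int.squarefree_natCast.2 ((Nat.squarefree_mul hcop).2 ⟨hsf, hp.prime.squarefree⟩)
  have hdiv (d : ℤ) (hx : d ∣ X) (hy : d ∣ Y) : IsUnit d := by
    apply hsq d
    push_cast
    rw [hpm]
    obtain ⟨x, rfl⟩ := hx
    obtain ⟨y, rfl⟩ := hy
    exact ⟨x ^ 2 + 11 * y ^ 2, by ring⟩
  have hc : IsCoprime X Y := by
    rw [Int.isCoprime_iff_gcd_eq_one]
    have := hdiv (Int.gcd X Y) (Int.gcd_dvd_left ..) (Int.gcd_dvd_right ..)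
    simpa using Int.isUnit_iff_natAbs_eq.1 this
  have ho : (m * p : ℤ) % 2 = 1 := by
    have hpo := hp.eq_two_or_odd.resolve_left hp2
    have : (m * p) % 2 = 1 := by rw [Nat.mul_mod, hodd, hpo]
    exact_mod_cast this
  obtain ⟨S, hS, hSm, hcN, hS3⟩ := symbol p m X Y hpm hc hY ho
  have cm : IsCoprime (m : ℤ) (al X Y).norm := hcN.of_isCoprime_of_dvd_left (Dvd.intro _ rfl)
  have cp : IsCoprime (p : ℤ) (al X Y).norm := hcN.of_isCoprime_of_dvd_left (Dvd.intro_left _ rfl)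
  have pp := Nat.prime_iff_prime_int.1 hp
  have hN : ¬ (p : ℤ) ∣ (al X Y).norm := (pp.coprime_iff_not_dvd).1 cp
  have hpd : (p : ℤ) ∣ X ^ 2 + 11 * Y ^ 2 := by rw [← hpm]; exact Dvd.intro_left _ rfl
  have hpY : ¬ (p : ℤ) ∣ Y := by
    intro h
    refine pp.not_isUnit (hdiv p ?_ h)
    have : (p : ℤ) ∣ X ^ 2 := by
      have h' : (p : ℤ) ∣ 11 * Y ^ 2 := (h.mul_right Y).trans ⟨11, by ring⟩
      exact (dvd_add_left h').1 hpd
    exact pp.dvd_of_dvd_pow this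
  obtain ⟨a, b, c, e1, e2, e3, f1, f2⟩ := roots p hp2 hp3 X Y S hS (hS3 _ cp) hN hpd hpY
    (AlgebraicClosure (ZMod p))
  refine ⟨S, hS, cm, hS3 _ cm, ?_, ?_⟩
  · intro h
    rw [h, mul_one] at hSm
    exact T_fixed p hp hp2 hp11 T h1 h2 h3 hrec a b c e1 e2 e3 (f1 hSm)
  · intro h
    refine T_cyc p hp hp2 T h1 h2 h3 hrec a b c e1 e2 e3 (f2 ?_)
    intro h'
    rw [h', one_mul] at hSm
    exact h hSm

theorem sq_mod3 (Z : ℤ) : Z % 3 = 0 ∧ Z ^ 2 % 3 = 0 ∨ Z % 3 ≠ 0 ∧ Z ^ 2 % 3 = 1 := by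
  have : Z % 3 = 0 ∨ Z % 3 = 1 ∨ Z % 3 = 2 := by omega
  have e8 : Z ^ 2 % 3 = (Z % 3) ^ 2 % 3 := by simp [pow_two, Int.mul_emod]
  rcases this with h | h | h <;> rw [h] at e8 <;> norm_num at e8 <;> omega

theorem principal (p : ℕ) [hpf : Fact p.Prime] (hp2 : p ≠ 2) (hp3 : p ≠ 3) (hp11 : p ≠ 11)
    (T : ℕ → ℤ) (h1 : T 1 = 1) (h2 : T 2 = 1) (h3 : T 3 = 2)
    (hrec : ∀ n, 4 ≤ n → T n = T (n - 1) + T (n - 2) + T (n - 3))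
    (x y : ℤ) (h : (p : ℤ) = x ^ 2 + 11 * y ^ 2) : (p : ℤ) ∣ T (p - 1) := by
  have hp := hpf.out
  have h3p : ¬ 3 ∣ p := fun h => hp3 ((Nat.prime_dvd_prime_iff_eq Nat.prime_three hp).1 h).symm
  have sx := sq_mod3 x
  have sy := sq_mod3 y
  have hy : ¬ 3 ∣ y ∨ ¬ 3 ∣ x := by
    generalize x ^ 2 = A at *
    generalize y ^ 2 = B at *
    omega
  rcases hy with hy | hx
  · obtain ⟨S, -, -, -, hS, -⟩ := final p 1 hp2 hp3 hp11 x y (by push_cast; linarith) squarefree_one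
      (by simp) hy rfl T h1 h2 h3 hrec
    exact hS (by simp)
  · obtain ⟨S, hR, hc, h3, hS, -⟩ := final p 11 hp2 hp3 hp11 (11 * y) x (by push_cast; linarith)
      (Nat.Prime.prime (by norm_num)).squarefree
      ((Nat.coprime_primes (by norm_num) hp).2 (Ne.symm hp11)) hx rfl T h1 h2 h3 hrec
    apply hS
    have : Fact (Nat.Prime 11) := ⟨by norm_num⟩
    refine X_eq_one 11 (by norm_num) _ S hR ?_ h3 ?_
    · exact ((Nat.prime_iff_prime_int.1 this.out).coprime_iff_not_dvd).1 hc
    · intro k _ _ φ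
      left
      obtain ⟨s, hs, -, hi⟩ := al_img φ
      have h0 : (11 : k) = 0 := by exact_mod_cast CharP.cast_eq_zero k 11
      rw [(hi _ x).1, (hi _ x).2]; push_cast; rw [h0]; ring

theorem nonprincipal (p : ℕ) [hpf : Fact p.Prime] (hp2 : p ≠ 2) (hp3 : p ≠ 3) (hp11 : p ≠ 11)
    (T : ℕ → ℤ) (h1 : T 1 = 1) (h2 : T 2 = 1) (h3 : T 3 = 2)
    (hrec : ∀ n, 4 ≤ n → T n = T (n - 1) + T (n - 2) + T (n - 3))
    (x y : ℤ) (h : (p : ℤ) = 3 * x ^ 2 + 2 * x * y + 4 * y ^ 2) : ¬ (p : ℤ) ∣ T (p - 1) := by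
  have hp := hpf.out
  have h3p : ¬ 3 ∣ p := fun h => hp3 ((Nat.prime_dvd_prime_iff_eq Nat.prime_three hp).1 h).symm
  have hmod : p % 3 = 1 ∨ p % 3 = 2 := by omega
  rcases hmod with hm | hm
  · have E : ((5 : ℕ) * p : ℤ) = (2 * x - 3 * y) ^ 2 + 11 * (-(x + y)) ^ 2 := by
      push_cast; linear_combination 5 * h
    set X := 2 * x - 3 * y with hX
    set Y := -(x + y) with hYd
    have hXY : X = -2 * Y - 5 * y := by rw [hX, hYd]; ring
    clear_value X Y
    have hY : ¬ 3 ∣ Y := by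
      have sx := sq_mod3 X
      have sy := sq_mod3 Y
      generalize X ^ 2 = A at *
      generalize Y ^ 2 = B at *
      push_cast at E
      omega
    have h5 : Fact (Nat.Prime 5) := ⟨by norm_num⟩
    obtain ⟨S, hR, hc, h3, -, hS⟩ := final p 5 hp2 hp3 hp11 X Y E h5.out.prime.squarefree
      ((Nat.coprime_primes h5.out hp).2 (by rintro rfl; omega)) hY rfl T h1 h2 h3 hrec
    apply hS
    intro hS1
    have hN : ¬ ((5 : ℕ) : ℤ) ∣ (al X Y).norm :=
      ((Nat.prime_iff_prime_int.1 h5.out).coprime_iff_not_dvd).1 hc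
    obtain ⟨φ, -⟩ := exists_hom 5 h5.out (by norm_num) (AlgebraicClosure (ZMod 5))
    have hr := (hR 5 (by norm_num) hN _ φ).2 (by norm_num)
    obtain ⟨s, hs, -, hi⟩ := al_img φ
    rw [hS1, map_one, one_mul, (hi X Y).1, (hi X Y).2] at hr
    norm_num at hr
    have h0 : (5 : AlgebraicClosure (ZMod 5)) = 0 := by
      exact_mod_cast CharP.cast_eq_zero (AlgebraicClosure (ZMod 5)) 5
    have hXk : (X : AlgebraicClosure (ZMod 5)) = -2 * Y := by
      rw [hXY]; push_cast; rw [h0]; ring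
    have hYk : (Y : AlgebraicClosure (ZMod 5)) ≠ 0 := by
      intro hY0
      apply hN
      rw [← CharP.intCast_eq_zero_iff (AlgebraicClosure (ZMod 5)) 5, al_norm]
      push_cast
      rw [hXk, hY0]; ring
    rw [hXk] at hr
    have hb : (456 * s : AlgebraicClosure (ZMod 5)) = 0 := by
      apply mul_left_cancel₀ (pow_ne_zero 2 hYk)
      linear_combination hr
    refine nat_ne_zero 5 h5.out (AlgebraicClosure (ZMod 5)) (456 * 3) (by norm_num) ?_
    push_cast
    linear_combination (-s) * hb + 456 * hs
  · have E : ((37 : ℕ) * p : ℤ) = (10 * x + 7 * y) ^ 2 + 11 * (x - 3 * y) ^ 2 := by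
      push_cast; linear_combination 37 * h
    set X := 10 * x + 7 * y with hX
    set Y := x - 3 * y with hYd
    have hXY : X = 10 * Y + 37 * y := by rw [hX, hYd]; ring
    clear_value X Y
    have hY : ¬ 3 ∣ Y := by
      have sx := sq_mod3 X
      have sy := sq_mod3 Y
      generalize X ^ 2 = A at *
      generalize Y ^ 2 = B at *
      push_cast at E
      omega
    have h5 : Fact (Nat.Prime 37) := ⟨by norm_num⟩
    obtain ⟨S, hR, hc, h3, -, hS⟩ := final p 37 hp2 hp3 hp11 X Y E h5.out.prime.squarefree
      ((Nat.coprime_primes h5.out hp).2 (by rintro rfl; omega)) hY rfl T h1 h2 h3 hrec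
    apply hS
    intro hS1
    have hN : ¬ ((37 : ℕ) : ℤ) ∣ (al X Y).norm :=
      ((Nat.prime_iff_prime_int.1 h5.out).coprime_iff_not_dvd).1 hc
    obtain ⟨φ, -⟩ := exists_hom 37 h5.out (by norm_num) (AlgebraicClosure (ZMod 37))
    have hr := (hR 37 (by norm_num) hN _ φ).1 (by norm_num)
    obtain ⟨s, hs, -, hi⟩ := al_img φ
    rw [hS1, map_one, one_mul, (hi X Y).1, (hi X Y).2] at hr
    norm_num at hr
    have h0 : (37 : AlgebraicClosure (ZMod 37)) = 0 := by
      exact_mod_cast CharP.cast_eq_zero (AlgebraicClosure (ZMod 37)) 37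
    have hXk : (X : AlgebraicClosure (ZMod 37)) = 10 * Y := by
      rw [hXY]; push_cast; rw [h0]; ring
    have hYk : (Y : AlgebraicClosure (ZMod 37)) ≠ 0 := by
      intro hY0
      apply hN
      rw [← CharP.intCast_eq_zero_iff (AlgebraicClosure (ZMod 37)) 37, al_norm]
      push_cast
      rw [hXk, hY0]; ring
    rw [hXk] at hr
    have hr2 : (19 + 30 * s) ^ 12 = (19 - 30 * s) ^ 12 := by
      apply mul_left_cancel₀ (pow_ne_zero 12 hYk)
      linear_combination hr
    have key (t : AlgebraicClosure (ZMod 37)) (ht : t ^ 2 = -3) : (19 + 30 * t) ^ 12 = (-398514998299172522039) + (415463339699747178840) * t := by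
      have z2 : (19 + 30 * t) ^ 2 = (-2339) + (1140) * t := by linear_combination 900 * ht
      have z4 : (19 + 30 * t) ^ 4 = (1572121) + (-5332920) * t := by
        rw [show (19 + 30 * t) ^ 4 = ((19 + 30 * t) ^ 2) ^ 2 by ring, z2]
        linear_combination (1140) ^ 2 * ht
      have z8 : (19 + 30 * t) ^ 8 = (-82848542740559) + (-16767991046640) * t := by
        rw [show (19 + 30 * t) ^ 8 = ((19 + 30 * t) ^ 4) ^ 2 by ring, z4]
        linear_combination (-5332920) ^ 2 * ht
      rw [show (19 + 30 * t) ^ 12 = (19 + 30 * t) ^ 4 * (19 + 30 * t) ^ 8 by ring, z4, z8]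
      linear_combination (-5332920) * (-16767991046640) * ht
    have k1 := key s hs
    have k2 := key (-s) (by rw [neg_sq, hs])
    have hb : (2 * (415463339699747178840) * s : AlgebraicClosure (ZMod 37)) = 0 := by
      have e : 19 + 30 * (-s) = 19 - 30 * s := by ring
      rw [e, ← hr2] at k2
      linear_combination k2 - k1
    refine nat_ne_zero 37 h5.out (AlgebraicClosure (ZMod 37)) (6 * 415463339699747178840) (by norm_num) ?_
    norm_num
    linear_combination (-1) * s * hb - (-1) * 2 * (415463339699747178840) * hs

theorem not_sq_seven : ¬ IsSquare (-11 : ZMod 7) := by decide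

theorem tribonacci_divisibility (T : ℕ → ℤ)
    (h1 : T 1 = 1) (h2 : T 2 = 1) (h3 : T 3 = 2)
    (hrec : ∀ n, 4 ≤ n → T n = T (n - 1) + T (n - 2) + T (n - 3))
    (p : ℕ) (hp : p.Prime) (hpe : ¬ (p ∣ 11 * 19)) :
    (p : ℤ) ∣ T (p - 1) ↔ ∃ X Y : ℤ, (p : ℤ) = X ^ 2 + 11 * Y ^ 2 := by
  have hp11 : p ≠ 11 := by rintro rfl; exact hpe (by norm_num)
  have hp19 : p ≠ 19 := by rintro rfl; exact hpe (by norm_num)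
  have hpf : Fact p.Prime := ⟨hp⟩
  have small (q : ℤ) (hq : q = 2 ∨ q = 3) : ¬ ∃ X Y : ℤ, q = X ^ 2 + 11 * Y ^ 2 := by
    rintro ⟨X, Y, h⟩
    have hY : Y = 0 := by
      by_contra hY
      have : 0 < Y ^ 2 := by positivity
      have := sq_nonneg X
      omega
    rw [hY] at h
    have hX : X ^ 2 = q := by rw [h]; ring
    have hq3 : X ^ 2 ≤ 3 := by omega
    have hl : X < 2 := by nlinarith
    have hg : -2 < X := by nlinarith
    interval_cases X <;> omega
  by_cases hp2 : p = 2
  · subst hp2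
    refine iff_of_false ?_ (small _ (by norm_num))
    norm_num [h1]
  by_cases hp3 : p = 3
  · subst hp3
    refine iff_of_false ?_ (small _ (by norm_num))
    norm_num [h2]
  constructor
  · intro hT
    have hsq := sq_of_dvd p hp2 hp3 hp11 hp19 T h1 h2 h3 hrec hT
    have hp7 : p ≠ 7 := by
      rintro rfl
      exact not_sq_seven hsq
    obtain ⟨X, Y, m, h, hm0, hm⟩ := thue p hsq
    rcases reduce p hp hp2 hp7 X Y m h hm0 hm with h | ⟨x, y, h⟩
    · exact h
    · exact absurd hT (nonprincipal p hp2 hp3 hp11 T h1 h2 h3 hrec x y h)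
  · rintro ⟨x, y, h⟩
    exact principal p hp2 hp3 hp11 T h1 h2 h3 hrec x y h
end

section
/- Let (B_n) be the Padovan sequence defined by B_0=0, B_1=B_2=1 and B_n = B_{n-2} + B_{n-3} for n ≥ 3. Then a prime p divides B_{p-1} if and only if there exist integers X, Y with X ≠ 0 and p = X^2 + 23Y^2. -/
lemma pd_w3 {R : Type} [CommRing R] {w : R} (hw : w ^ 2 + w + 1 = 0) : w ^ 3 = 1 := by
  linear_combination (w - 1) * hw

/-- the homomorphism sending the generator of the cyclic group of order three to `w` -/
def pdHom {R : Type} [CommRing R] (w : R) (hw : w ^ 2 + w + 1 = 0) :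
    Multiplicative (ZMod 3) →* Rˣ where
  toFun z := (⟨w, w ^ 2, by linear_combination (w - 1) * hw,
    by linear_combination (w - 1) * hw⟩ : Rˣ) ^ (z.toAdd.val)
  map_one' := by simp
  map_mul' := by
    intro a b
    have h3 := pd_w3 hw
    set u : Rˣ := ⟨w, w ^ 2, by linear_combination (w - 1) * hw,
      by linear_combination (w - 1) * hw⟩ with hu
    have hu3 : u ^ 3 = 1 := by
      ext; simpa [hu] using h3
    have : ∀ x y : ZMod 3, u ^ (x + y).val = u ^ x.val * u ^ y.val := by
      intro x y
      rw [← pow_add, ZMod.val_add, ← pow_mod_orderOf u (x.val + y.val)]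
      rw [← pow_mod_orderOf u ((x.val + y.val) % 3)]
      rw [Nat.mod_mod_of_dvd _ (orderOf_dvd_of_pow_eq_one hu3)]
    exact this _ _

lemma pdHom_apply {R : Type} [CommRing R] (w : R) (hw : w ^ 2 + w + 1 = 0)
    (z : Multiplicative (ZMod 3)) : ((pdHom w hw z : Rˣ) : R) = w ^ (z.toAdd.val) := by
  simp [pdHom]

noncomputable def pdChi {r : ℕ} (d : (ZMod r)ˣ →* Multiplicative (ZMod 3))
    {R : Type} [CommRing R] (w : R) (hw : w ^ 2 + w + 1 = 0) : MulChar (ZMod r) R :=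
  MulChar.ofUnitHom ((pdHom w hw).comp d)

lemma pdChi_coe {r : ℕ} (d : (ZMod r)ˣ →* Multiplicative (ZMod 3))
    {R : Type} [CommRing R] (w : R) (hw : w ^ 2 + w + 1 = 0) (u : (ZMod r)ˣ) :
    pdChi d w hw u = w ^ ((d u).toAdd.val) := by
  simp [pdChi, pdHom_apply]

lemma pdChi_cube {r : ℕ} (d : (ZMod r)ˣ →* Multiplicative (ZMod 3))
    {R : Type} [CommRing R] (w : R) (hw : w ^ 2 + w + 1 = 0) : pdChi d w hw ^ 3 = 1 := by
  ext u
  rw [MulChar.pow_apply_coe, pdChi_coe, MulChar.one_apply_coe, ← pow_mul, mul_comm, pow_mul,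
    pd_w3 hw, one_pow]

lemma pd_w_ne_one {R : Type} [CommRing R] {w : R} (hw : w ^ 2 + w + 1 = 0)
    (h3 : (3 : R) ≠ 0) : w ≠ 1 := by
  rintro rfl; apply h3; linear_combination hw

lemma pdChi_ne_one {r : ℕ} (d : (ZMod r)ˣ →* Multiplicative (ZMod 3))
    (hd : Function.Surjective d)
    {R : Type} [CommRing R] (w : R) (hw : w ^ 2 + w + 1 = 0) (h3 : (3 : R) ≠ 0) :
    pdChi d w hw ≠ 1 := by
  intro h
  obtain ⟨u, hu⟩ := hd (Multiplicative.ofAdd 1)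
  have := congrArg (fun χ : MulChar (ZMod r) R => χ u) h
  simp only [pdChi_coe, MulChar.one_apply_coe, hu] at this
  have e : (Multiplicative.toAdd (Multiplicative.ofAdd (1 : ZMod 3))).val = 1 := rfl
  rw [e, pow_one] at this
  exact pd_w_ne_one hw h3 this

lemma pdChi_order {r : ℕ} (d : (ZMod r)ˣ →* Multiplicative (ZMod 3))
    (hd : Function.Surjective d)
    {R : Type} [CommRing R] (w : R) (hw : w ^ 2 + w + 1 = 0) (h3 : (3 : R) ≠ 0) :
    orderOf (pdChi d w hw) = 3 := 
  orderOf_eq_prime (pdChi_cube d w hw) (pdChi_ne_one d hd w hw h3)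

lemma pd_wsq {R : Type} [CommRing R] {w : R} (hw : w ^ 2 + w + 1 = 0) :
    (w ^ 2) ^ 2 + w ^ 2 + 1 = 0 := by
  linear_combination (w ^ 2 - w + 1) * hw

lemma pdChi_inv {r : ℕ} (d : (ZMod r)ˣ →* Multiplicative (ZMod 3))
    {R : Type} [CommRing R] (w : R) (hw : w ^ 2 + w + 1 = 0) :
    (pdChi d w hw)⁻¹ = pdChi d (w ^ 2) (pd_wsq hw) := by
  rw [inv_eq_iff_mul_eq_one]
  ext u
  rw [MulChar.mul_apply, pdChi_coe, pdChi_coe, MulChar.one_apply_coe, ← pow_mul, ← pow_add]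
  have : (d u).toAdd.val + 2 * (d u).toAdd.val = 3 * (d u).toAdd.val := by ring
  rw [this, pow_mul, pd_w3 hw, one_pow]

lemma pdChi_lin {r : ℕ} [Fact r.Prime] (d : (ZMod r)ˣ →* Multiplicative (ZMod 3)) (x : ZMod r) :
    ∃ A B : ℤ, ∀ (R : Type) [CommRing R] (w : R) (hw : w ^ 2 + w + 1 = 0),
      pdChi d w hw x = A + B * w := by
  by_cases hx : IsUnit x
  · obtain ⟨u, rfl⟩ := hx
    have h : (d u).toAdd.val < 3 := ZMod.val_lt _
    generalize hk : (d u).toAdd.val = k at h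
    interval_cases k
    · exact ⟨1, 0, fun R _ w hw => by rw [pdChi_coe, hk]; simp⟩
    · exact ⟨0, 1, fun R _ w hw => by rw [pdChi_coe, hk]; simp⟩
    · exact ⟨-1, -1, fun R _ w hw => by
        rw [pdChi_coe, hk]; push_cast; linear_combination hw⟩
  · exact ⟨0, 0, fun R _ w hw => by rw [MulChar.map_nonunit _ hx]; simp⟩

lemma pdJac_lin {r : ℕ} [Fact r.Prime] (d : (ZMod r)ˣ →* Multiplicative (ZMod 3)) :
    ∃ x y : ℤ, ∀ (R : Type) [CommRing R] (w : R) (hw : w ^ 2 + w + 1 = 0),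
      jacobiSum (pdChi d w hw) (pdChi d w hw) = x + y * w := by
  choose A B h using pdChi_lin d
  refine ⟨∑ t, (A t * A (1 - t) - B t * B (1 - t)),
    ∑ t, (A t * B (1 - t) + B t * A (1 - t) - B t * B (1 - t)), fun R _ w hw => ?_⟩
  rw [jacobiSum]
  push_cast
  rw [Finset.sum_mul, ← Finset.sum_add_distrib]
  refine Finset.sum_congr rfl fun t _ => ?_
  rw [h, h]
  linear_combination (B t * B (1 - t) : R) * hw

lemma pd_exists_d {r : ℕ} [Fact r.Prime] (hr : r % 3 = 1) :
    ∃ d : (ZMod r)ˣ →* Multiplicative (ZMod 3), Function.Surjective d := by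
  have hc : Nat.card (ZMod r)ˣ = r - 1 := by
    rw [Nat.card_eq_fintype_card, ZMod.card_units]
  have e := zmodCyclicMulEquiv (G := (ZMod r)ˣ) inferInstance
  have hdvd : 3 ∣ Nat.card (ZMod r)ˣ := by rw [hc]; omega
  let f : ZMod (Nat.card (ZMod r)ˣ) →+ ZMod 3 := (ZMod.castHom hdvd (ZMod 3)).toAddMonoidHom
  have hf : Function.Surjective f := ZMod.castHom_surjective hdvd
  refine ⟨(AddMonoidHom.toMultiplicative f).comp e.symm.toMonoidHom, ?_⟩
  intro z
  obtain ⟨a, ha⟩ := hf z.toAdd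
  refine ⟨e (Multiplicative.ofAdd a), ?_⟩
  simp [ha]

lemma pd_gauss {r q : ℕ} [Fact r.Prime] [Fact q.Prime] (hqr : q ≠ r) (hq3 : q ≠ 3)
    (d : (ZMod r)ˣ →* Multiplicative (ZMod 3)) (hd : Function.Surjective d)
    (K : Type) [Field K] [IsAlgClosed K] [CharP K q] (w : K) (hw : w ^ 2 + w + 1 = 0) :
    ((r : K) * jacobiSum (pdChi d w hw) (pdChi d w hw)) ^ ((q ^ 2 - 1) / 3)
      = pdChi d w hw (q : ZMod r) ∧ (r : K) ≠ 0 := by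
  have hqp : q.Prime := Fact.out
  have hrp : r.Prime := Fact.out
  have hr0 : (r : K) ≠ 0 := by
    rw [Ne, CharP.cast_eq_zero_iff K q, Nat.prime_dvd_prime_iff_eq hqp hrp]; exact hqr
  have h30 : (3 : K) ≠ 0 := by
    have := CharP.cast_eq_zero_iff K q 3
    rw [Nat.prime_dvd_prime_iff_eq hqp Nat.prime_three] at this
    intro h; exact hq3 (this.1 (by exact_mod_cast h))
  refine ⟨?_, hr0⟩
  have : NeZero (r : K) := ⟨hr0⟩
  obtain ⟨ζ, hζ⟩ := HasEnoughRootsOfUnity.exists_primitiveRoot K r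
  set ψ := AddChar.zmodChar r ((IsPrimitiveRoot.iff_def ζ r).mp hζ).left
  have hψ : ψ.IsPrimitive := AddChar.zmodChar_primitive_of_primitive_root r hζ
  set χ := pdChi d w hw with hχ
  have ho : orderOf χ = 3 := pdChi_order d hd w hw h30
  have hg3 := gaussSum_pow_eq_prod_jacobiSum (χ := χ) (by omega) hψ
  rw [ho] at hg3
  have hm1 : χ (-1) = 1 := by
    have h2 : χ (-1) ^ 2 = 1 := by rw [← map_pow]; simp
    have h3 : χ (-1) ^ 3 = 1 := by
      have h := MulChar.pow_apply_coe χ 3 (-1)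
      rw [pdChi_cube, MulChar.one_apply_coe] at h
      simpa using h.symm
    linear_combination h3 - χ (-1) * h2
  rw [hm1] at hg3
  simp only [ZMod.card, one_mul] at hg3
  rw [show Finset.Ico 1 (3 - 1) = {1} from rfl, Finset.prod_singleton, pow_one] at hg3
  set g := gaussSum χ ψ
  have hqu : IsUnit (q : ZMod r) := by
    rw [ZMod.isUnit_iff_coprime]; exact (Nat.coprime_primes hqp hrp).2 hqr
  obtain ⟨u, hu⟩ := hqu
  have hmod : q ^ 2 % 3 = 1 := by
    have : q % 3 ≠ 0 := fun h => hq3 ((Nat.prime_dvd_prime_iff_eq Nat.prime_three hqp).1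
      (Nat.dvd_of_mod_eq_zero h)).symm
    have : q % 3 = 1 ∨ q % 3 = 2 := by omega
    rcases this with h | h <;> simp [Nat.pow_mod, h]
  have hk : 3 * ((q ^ 2 - 1) / 3) + 1 = q ^ 2 := by
    have := Nat.pos_of_ne_zero (pow_ne_zero 2 hqp.ne_zero); omega
  have hfr : χ q ^ 2 * g ^ (q ^ 2) = g := by
    have h1 : g ^ (q ^ 2) = gaussSum χ (ψ.mulShift ((u ^ 2 : (ZMod r)ˣ) : ZMod r)) := by
      rw [pow_two q, pow_mul, gaussSum_frob q, gaussSum_frob q, ← pow_mul, ← pow_mul, ← pow_two,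
        AddChar.pow_mulShift, ← hk, pow_add, pow_mul, pdChi_cube, one_pow, one_mul, pow_one, hk]
      simp [hu]
    rw [h1, ← hu, ← map_pow, ← Units.val_pow_eq_pow_val]
    exact gaussSum_mulShift χ ψ (u ^ 2)
  have hg0 : g ≠ 0 := gaussSum_ne_zero_of_nontrivial (by rw [ZMod.card]; exact hr0)
    (pdChi_ne_one d hd w hw h30) hψ
  have hc3 : χ q ^ 3 = 1 := by
    rw [← hu, ← MulChar.pow_apply_coe, pdChi_cube, MulChar.one_apply_coe]
  rw [← hg3, ← pow_mul]
  have h5 : χ q ^ 2 * g ^ (3 * ((q ^ 2 - 1) / 3)) = 1 := by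
    apply mul_right_cancel₀ hg0
    rw [mul_assoc, ← pow_succ, hk, hfr, one_mul]
  linear_combination (χ q) * h5 - g ^ (3 * ((q ^ 2 - 1) / 3)) * hc3


lemma pd_pow_val {R : Type} [CommRing R] {w : R} (hw : w ^ 2 + w + 1 = 0) (x y : ZMod 3) :
    w ^ (x + y).val = w ^ x.val * w ^ y.val := by
  have := congrArg (fun u : Rˣ => (u : R))
    ((pdHom w hw).map_mul (Multiplicative.ofAdd x) (Multiplicative.ofAdd y))
  simp only [Units.val_mul, pdHom_apply] at this
  exact this

lemma pd_sq_pow_val {R : Type} [CommRing R] {w : R} (hw : w ^ 2 + w + 1 = 0) (x : ZMod 3) :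
    (w ^ 2) ^ x.val * w ^ x.val = 1 := by
  rw [← mul_pow, ← pow_succ, pd_w3 hw, one_pow]

lemma pd_pos {A B : ℤ} (h : A ^ 2 - A * B + B ^ 2 = 0) : A = 0 ∧ B = 0 := by
  have hB : B ^ 2 = 0 := by nlinarith [sq_nonneg (2 * A - B), sq_nonneg B]
  have hA : A ^ 2 = 0 := by nlinarith [sq_nonneg (2 * B - A), sq_nonneg A]
  exact ⟨pow_eq_zero_iff (two_ne_zero) |>.1 hA, pow_eq_zero_iff (two_ne_zero) |>.1 hB⟩

lemma pd_indep {w : ℂ} (hw : w ^ 2 + w + 1 = 0) {A B : ℤ} (h : (A : ℂ) + B * w = 0) :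
    A = 0 ∧ B = 0 := by
  apply pd_pos
  have : ((A ^ 2 - A * B + B ^ 2 : ℤ) : ℂ) = 0 := by
    push_cast
    linear_combination ((A : ℂ) + B * w ^ 2) * h - (A * B + B ^ 2 * (w - 1)) * hw
  exact_mod_cast this

lemma pd_adjoin {w z : ℂ} (hw : w ^ 2 + w + 1 = 0) (hz : z ∈ Algebra.adjoin ℤ {w}) :
    ∃ u v : ℤ, z = u + v * w := by
  induction hz using Algebra.adjoin_induction with
  | mem x hx => 
    rw [Set.mem_singleton_iff] at hx; subst hx; exact ⟨0, 1, by simp⟩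
  | algebraMap r => exact ⟨r, 0, by simp⟩
  | add x y _ _ hx hy =>
    obtain ⟨u, v, rfl⟩ := hx
    obtain ⟨u', v', rfl⟩ := hy
    exact ⟨u + u', v + v', by push_cast; ring⟩
  | mul x y _ _ hx hy =>
    obtain ⟨u, v, rfl⟩ := hx
    obtain ⟨u', v', rfl⟩ := hy
    exact ⟨u * u' - v * v', u * v' + v * u' - v * v', by
      push_cast; linear_combination (v * v' : ℂ) * hw⟩

def PdGood (a b : ℤ) : Prop :=
  ∃ c : ℤ → ZMod 3,
    (∀ m n : ℤ, IsCoprime m (a ^ 2 - a * b + b ^ 2) → IsCoprime n (a ^ 2 - a * b + b ^ 2) →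
      c (m * n) = c m + c n) ∧
    (∀ m n : ℤ, (a ^ 2 - a * b + b ^ 2) ∣ m - n → c m = c n) ∧
    (∀ q : ℕ, q.Prime → q ≠ 3 → IsCoprime (q : ℤ) (a ^ 2 - a * b + b ^ 2) →
      ∀ (K : Type) [Field K] [IsAlgClosed K] [CharP K q] (w : K), w ^ 2 + w + 1 = 0 →
      ((a : K) + b * w ^ 2) ^ ((q ^ 2 - 1) / 3) =
        ((a : K) + b * w) ^ ((q ^ 2 - 1) / 3) * w ^ (c q).val)

lemma pd_core {r : ℕ} (hrp : r.Prime) (hr : r % 3 = 1) :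
    ∃ x y : ℤ, 3 ∣ y ∧ ¬ 3 ∣ x ∧ x ^ 2 - x * y + y ^ 2 = r ∧ PdGood x y := by
  have : Fact r.Prime := ⟨hrp⟩
  obtain ⟨d, hd⟩ := pd_exists_d (r := r) hr
  obtain ⟨x, y, hxy⟩ := pdJac_lin d
  have hprim := Complex.isPrimitiveRoot_exp 3 (by norm_num)
  generalize Complex.exp (2 * Real.pi * Complex.I / (3 : ℕ)) = w at hprim
  have hw : w ^ 2 + w + 1 = 0 := by
    have h3 := hprim.pow_eq_one
    have h1 : w - 1 ≠ 0 := sub_ne_zero.2 (hprim.ne_one (by norm_num))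
    apply mul_left_cancel₀ h1
    linear_combination h3
  have h3C : (3 : ℂ) ≠ 0 := by norm_num
  have hN : x ^ 2 - x * y + y ^ 2 = r := by
    have hne := pdChi_ne_one d hd w hw h3C
    have hsq : pdChi d w hw * pdChi d w hw ≠ 1 := by
      intro h
      apply hne
      have := pdChi_cube d w hw
      rwa [pow_succ, pow_two, h, one_mul] at this
    have h := jacobiSum_mul_jacobiSum_inv (F := ZMod r) (F' := ℂ) (by
      rw [ringChar.eq_zero, ZMod.ringChar_zmod_n]; exact hrp.ne_zero.symm) hne hne hsq
    rw [pdChi_inv, hxy, hxy, ZMod.card] at h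
    have : ((x ^ 2 - x * y + y ^ 2 : ℤ) : ℂ) = ((r : ℤ) : ℂ) := by
      push_cast
      linear_combination h - (x * y + y ^ 2 * (w - 1)) * hw
    exact_mod_cast this
  have hprimary : 3 ∣ y ∧ ¬ 3 ∣ x := by
    obtain ⟨z, hz, hJ⟩ := exists_jacobiSum_eq_neg_one_add (F := ZMod r) (n := 3) (by norm_num)
      (pdChi_cube d w hw) (pdChi_cube d w hw) (by rw [ZMod.card]; omega) hprim
    obtain ⟨u, v, rfl⟩ := pd_adjoin hw hz
    rw [hxy] at hJ
    have h := pd_indep hw (A := x + 1 - 3 * v) (B := y + 3 * u - 3 * v) (by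
      push_cast
      linear_combination hJ + (u + v * (w - 3)) * hw)
    omega
  refine ⟨x, y, hprimary.1, hprimary.2, hN, ?_⟩
  classical
  refine ⟨fun n => if h : IsUnit (n : ZMod r) then (d h.unit).toAdd else 0, ?_, ?_, ?_⟩
  · have key : ∀ m : ℤ, IsCoprime m (x ^ 2 - x * y + y ^ 2) → IsUnit (m : ZMod r) := by
      intro m hm
      rw [hN] at hm
      exact (ZMod.coe_int_isUnit_iff_isCoprime m r).2 hm.symm
    intro m n hm hn
    have h1 := key m hm
    have h2 := key n hn
    have h3 : IsUnit ((m * n : ℤ) : ZMod r) := by push_cast; exact h1.mul h2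
    beta_reduce
    rw [dif_pos h1, dif_pos h2, dif_pos h3, ← toAdd_mul, ← map_mul]
    congr 2
    ext; simp
  · intro m n hmn
    rw [hN] at hmn
    have : (m : ZMod r) = n := by
      rw [← sub_eq_zero, ← Int.cast_sub]
      exact (ZMod.intCast_zmod_eq_zero_iff_dvd _ r).2 hmn
    simp only [this]
  · intro q hq hq3 hqN K _ _ _ w hw
    have : Fact q.Prime := ⟨hq⟩
    rw [hN] at hqN
    have hqr : q ≠ r := by
      rintro rfl
      have := Nat.isCoprime_iff_coprime.1 hqN
      simp [hq.ne_one] at this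
    have hu : IsUnit (((q : ℤ)) : ZMod r) := (ZMod.coe_int_isUnit_iff_isCoprime _ r).2 hqN.symm
    beta_reduce
    rw [dif_pos hu]
    obtain ⟨u, hu'⟩ := id hu
    have hun : hu.unit = u := by ext; simp [hu']
    rw [hun]
    push_cast at hu'
    obtain ⟨h1, h0⟩ := pd_gauss hqr hq3 d hd K w hw
    obtain ⟨h2, -⟩ := pd_gauss hqr hq3 d hd K (w ^ 2) (pd_wsq hw)
    rw [hxy, ← hu', pdChi_coe, mul_pow] at h1 h2
    apply mul_left_cancel₀ (pow_ne_zero ((q ^ 2 - 1) / 3) h0)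
    rw [h2, ← mul_assoc, h1, ← pow_mul, two_mul, pow_add]

lemma PdGood.mul {a b x y : ℤ} (h1 : PdGood a b) (h2 : PdGood x y) :
    PdGood (a * x - b * y) (a * y + b * x - b * y) := by
  obtain ⟨c, hm, hp, hr⟩ := h1
  obtain ⟨c', hm', hp', hr'⟩ := h2
  have e : (a * x - b * y) ^ 2 - (a * x - b * y) * (a * y + b * x - b * y) +
    (a * y + b * x - b * y) ^ 2 = (a ^ 2 - a * b + b ^ 2) * (x ^ 2 - x * y + y ^ 2) := by ring
  unfold PdGood
  rw [e]
  refine ⟨fun n => c n + c' n, ?_, ?_, ?_⟩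
  · intro m n h h'
    simp only
    rw [hm _ _ (IsCoprime.of_mul_right_left h) (IsCoprime.of_mul_right_left h'),
      hm' _ _ (IsCoprime.of_mul_right_right h) (IsCoprime.of_mul_right_right h')]
    ring
  · intro m n h
    simp only
    rw [hp _ _ (dvd_of_mul_right_dvd h), hp' _ _ (dvd_of_mul_left_dvd h)]
  · intro q hq hq3 hqN K _ _ _ w hw
    have k1 := hr q hq hq3 (IsCoprime.of_mul_right_left hqN) K w hw
    have k2 := hr' q hq hq3 (IsCoprime.of_mul_right_right hqN) K w hw
    simp only
    rw [pd_pow_val hw]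
    have e1 : (((a * x - b * y : ℤ) : K) + ((a * y + b * x - b * y : ℤ) : K) * w ^ 2) =
      (a + b * w ^ 2) * (x + y * w ^ 2) := by
      push_cast; linear_combination (-b * y * (w ^ 2 - w + 1)) * hw
    have e2 : (((a * x - b * y : ℤ) : K) + ((a * y + b * x - b * y : ℤ) : K) * w) =
      (a + b * w) * (x + y * w) := by
      push_cast; linear_combination (-b * y) * hw
    rw [e1, e2, mul_pow, mul_pow, k1, k2]
    ring

lemma PdGood.conj {a b : ℤ} (h1 : PdGood a b) : PdGood (a - b) (-b) := by
  obtain ⟨c, hm, hp, hr⟩ := h1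
  have e : (a - b) ^ 2 - (a - b) * (-b) + (-b) ^ 2 = a ^ 2 - a * b + b ^ 2 := by ring
  unfold PdGood
  rw [e]
  refine ⟨fun n => c n + c n, ?_, ?_, ?_⟩
  · intro m n h h'
    simp only
    rw [hm _ _ h h']
    ring
  · intro m n h
    simp only
    rw [hp _ _ h]
  · intro q hq hq3 hqN K _ _ _ w hw
    have k1 := hr q hq hq3 hqN K w hw
    simp only
    have e1 : (((a - b : ℤ) : K) + ((-b : ℤ) : K) * w ^ 2) = (a + b * w) := by
      push_cast; linear_combination (-b) * hw
    have e2 : (((a - b : ℤ) : K) + ((-b : ℤ) : K) * w) = (a + b * w ^ 2) := by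
      push_cast; linear_combination (-b) * hw
    rw [e1, e2, k1, pd_pow_val hw]
    have := pd_sq_pow_val hw (c q)
    rw [← pow_mul, mul_comm 2, pow_mul] at this
    linear_combination (-((a : K) + b * w) ^ ((q ^ 2 - 1) / 3)) * this

lemma PdGood.rat (a : ℤ) : PdGood a 0 := by
  refine ⟨0, by simp, by simp, ?_⟩
  intro q hq hq3 hqN K _ _ _ w hw
  simp

lemma pd_good_all : ∀ (n : ℕ) (a b : ℤ), 3 ∣ b → ¬ 3 ∣ a → a ^ 2 - a * b + b ^ 2 = n →
    PdGood a b := by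
  intro n
  induction n using Nat.strong_induction_on with
  | _ n ih =>
  intro a b hb ha hn
  by_cases hb0 : b = 0
  · subst hb0; exact PdGood.rat a
  have hn1 : n ≠ 1 := by
    rintro rfl
    obtain ⟨b', rfl⟩ := hb
    have : b' ≠ 0 := by rintro rfl; simp at hb0
    have : 1 ≤ b' ^ 2 := by have := pow_pos (abs_pos.2 this) 2; rw [sq_abs] at this; omega
    push_cast at hn
    nlinarith [sq_nonneg (2 * a - 3 * b')]
  have hn0 : n ≠ 0 := by
    rintro rfl
    exact hb0 (pd_pos (by simpa using hn)).2
  obtain ⟨r, hr, hrn⟩ := Nat.exists_prime_and_dvd hn1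
  have hrZ : Prime (r : ℤ) := Nat.prime_iff_prime_int.1 hr
  have hrN : (r : ℤ) ∣ a ^ 2 - a * b + b ^ 2 := by rw [hn]; exact_mod_cast hrn
  have hr3 : r ≠ 3 := by
    rintro rfl
    apply ha
    have h3 : (3 : ℤ) ∣ a ^ 2 := by
      have h := dvd_add hrN (dvd_mul_of_dvd_left hb (a - b))
      have e : a ^ 2 - a * b + b ^ 2 + b * (a - b) = a ^ 2 := by ring
      push_cast at h
      rwa [e] at h
    exact Int.prime_three.dvd_of_dvd_pow h3
  have h2r := hr.two_le
  by_cases hrb : (r : ℤ) ∣ b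
  · have hra : (r : ℤ) ∣ a := by
      have h := dvd_add hrN (dvd_mul_of_dvd_left hrb (a - b))
      have e : a ^ 2 - a * b + b ^ 2 + b * (a - b) = a ^ 2 := by ring
      rw [e] at h
      exact hrZ.dvd_of_dvd_pow h
    obtain ⟨a', rfl⟩ := hra
    obtain ⟨b', rfl⟩ := hrb
    have hb' : 3 ∣ b' := by
      rcases Int.prime_three.dvd_or_dvd hb with h | h
      · exfalso; apply hr3
        exact ((Nat.prime_dvd_prime_iff_eq Nat.prime_three hr).1 (by exact_mod_cast h)).symm
      · exact h
    have ha' : ¬ 3 ∣ a' := fun h => ha (dvd_mul_of_dvd_right h _)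
    have hpos : 0 ≤ a' ^ 2 - a' * b' + b' ^ 2 := by nlinarith [sq_nonneg (2 * a' - b'), sq_nonneg b']
    obtain ⟨m, hm⟩ := Int.eq_ofNat_of_zero_le hpos
    have hlt : m < n := by
      have e : (n : ℤ) = r ^ 2 * m := by rw [← hn, ← hm]; ring
      have e' : n = r ^ 2 * m := by exact_mod_cast e
      have : 0 < m := Nat.pos_of_ne_zero (by rintro rfl; simp at e'; exact hn0 e')
      rw [e']; have : 1 < r ^ 2 := by nlinarith
      nlinarith
    have := (PdGood.rat r).mul (ih m hlt a' b' hb' ha' hm)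
    simpa using this
  · have hr1 : r % 3 = 1 := by
      have : Fact r.Prime := ⟨hr⟩
      have hb0 : (b : ZMod r) ≠ 0 := fun h => hrb ((ZMod.intCast_zmod_eq_zero_iff_dvd _ r).1 h)
      have hN0 : (a : ZMod r) ^ 2 - a * b + b ^ 2 = 0 := by
        have := (ZMod.intCast_zmod_eq_zero_iff_dvd _ r).2 hrN
        exact_mod_cast this
      have h30 : (3 : ZMod r) ≠ 0 := by
        intro h
        apply hr3
        have : ((3 : ℕ) : ZMod r) = 0 := by exact_mod_cast h
        rw [ZMod.natCast_eq_zero_iff] at this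
        exact (Nat.prime_dvd_prime_iff_eq hr Nat.prime_three).1 this
      obtain ⟨t, ht⟩ : ∃ t : ZMod r, (a : ZMod r) = - t * b := ⟨-a / b, by field_simp⟩
      have ht2 : t ^ 2 + t + 1 = 0 := by
        have : (b : ZMod r) ^ 2 * (t ^ 2 + t + 1) = 0 := by
          rw [ht] at hN0; linear_combination hN0
        exact (mul_eq_zero.1 this).resolve_left (pow_ne_zero 2 hb0)
      have : Fact (Nat.Prime 3) := ⟨Nat.prime_three⟩
      have ho : orderOf t = 3 := orderOf_eq_prime (pd_w3 ht2) (pd_w_ne_one ht2 h30)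
      have ht0 : t ≠ 0 := by rintro rfl; simp at ht2
      have hdv := ZMod.orderOf_dvd_card_sub_one (p := r) ht0
      rw [ho] at hdv
      omega
    obtain ⟨x, y, hy, hx, hxyN, hg⟩ := pd_core hr hr1
    have hry : ¬ (r : ℤ) ∣ y := by
      intro h
      have hrx : (r : ℤ) ∣ x := by
        have h := dvd_add (dvd_of_eq hxyN.symm) (dvd_mul_of_dvd_left h (x - y))
        have e : x ^ 2 - x * y + y ^ 2 + y * (x - y) = x ^ 2 := by ring
        rw [e] at h
        exact hrZ.dvd_of_dvd_pow h
      obtain ⟨x', rfl⟩ := hrx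
      obtain ⟨y', rfl⟩ := h
      have : (r : ℤ) * (r * (x' ^ 2 - x' * y' + y' ^ 2)) = r * 1 := by linear_combination hxyN
      have := mul_left_cancel₀ hrZ.ne_zero this
      exact hrZ.not_isUnit (IsUnit.of_mul_eq_one _ this)
    -- a prime element of norm r dividing
    have main : ∀ x y : ℤ, 3 ∣ y → ¬ 3 ∣ x → x ^ 2 - x * y + y ^ 2 = r → PdGood x y →
        ¬ (r : ℤ) ∣ y → (r : ℤ) ∣ b * x - a * y → PdGood a b := by
      intro x y hy hx hxyN hg hry hd
      have hd2 : (r : ℤ) ∣ a * x - a * y + b * y := by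
        have : (r : ℤ) ∣ y * (a * x - a * y + b * y) := by
          have e : y * (a * x - a * y + b * y) = b * r - (x - y) * (b * x - a * y) := by
            rw [← hxyN]; ring
          rw [e]
          exact dvd_sub (dvd_mul_left _ _) (dvd_mul_of_dvd_right hd _)
        exact (hrZ.dvd_or_dvd this).resolve_left hry
      obtain ⟨v, hv⟩ := hd
      obtain ⟨u, hu⟩ := hd2
      have ea : a = x * u - y * v := by
        apply mul_left_cancel₀ hrZ.ne_zero
        linear_combination (-a) * hxyN + x * hu - y * hv
      have eb : b = x * v + y * u - y * v := by
        apply mul_left_cancel₀ hrZ.ne_zero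
        linear_combination (-b) * hxyN + y * hu + (x - y) * hv
      have hv3 : 3 ∣ v := by
        have : 3 ∣ x * v := by
          have e : x * v = b - y * (u - v) := by rw [eb]; ring
          rw [e]; exact dvd_sub hb (dvd_mul_of_dvd_left hy _)
        exact (Int.prime_three.dvd_or_dvd this).resolve_left hx
      have hu3 : ¬ 3 ∣ u := by
        intro h; apply ha; rw [ea]
        exact dvd_sub (dvd_mul_of_dvd_right h _) (dvd_mul_of_dvd_left hy _)
      have hpos : 0 ≤ u ^ 2 - u * v + v ^ 2 := by nlinarith [sq_nonneg (2 * u - v), sq_nonneg v]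
      obtain ⟨m, hm⟩ := Int.eq_ofNat_of_zero_le hpos
      have hlt : m < n := by
        have e : (n : ℤ) = r * m := by
          rw [← hn, ← hm, ← hxyN, ea, eb]; ring
        have e' : n = r * m := by exact_mod_cast e
        have : 0 < m := Nat.pos_of_ne_zero (by rintro rfl; simp at e'; exact hn0 e')
        nlinarith
      rw [ea, eb]
      exact hg.mul (ih m hlt u v hv3 hu3 hm)
    have hprod : (r : ℤ) ∣ (b * x - a * y) * (b * (x - y) - a * (-y)) := by
      have e : (b * x - a * y) * (b * (x - y) - a * (-y)) =
        b ^ 2 * r - y ^ 2 * (a ^ 2 - a * b + b ^ 2) := by rw [← hxyN]; ring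
      rw [e]
      exact dvd_sub (dvd_mul_left _ _) (dvd_mul_of_dvd_right hrN _)
    rcases hrZ.dvd_or_dvd hprod with h | h
    · exact main x y hy hx hxyN hg hry h
    · refine main (x - y) (-y) (by omega) (by omega) (by rw [← hxyN]; ring) hg.conj
        (by rwa [dvd_neg]) h

lemma pd_exists_field {q : ℕ} (hq : q.Prime) :
    ∃ (L : Type) (_ : Field L) (_ : IsAlgClosed L), CharP L q := by
  have : Fact q.Prime := ⟨hq⟩
  exact ⟨AlgebraicClosure (ZMod q), inferInstance, inferInstance,
    charP_of_injective_algebraMap (algebraMap (ZMod q) (AlgebraicClosure (ZMod q))).injective q⟩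

lemma pd_norm_ne {q : ℕ} {a b : ℤ} (hq : q.Prime)
    (hc : IsCoprime (q : ℤ) (a ^ 2 - a * b + b ^ 2))
    {K : Type} [Field K] [CharP K q] {w : K} (hw : w ^ 2 + w + 1 = 0) :
    (a : K) + b * w ≠ 0 := by
  intro h
  have h0 : ((a ^ 2 - a * b + b ^ 2 : ℤ) : K) = 0 := by
    push_cast
    linear_combination ((a : K) + b * w ^ 2) * h - (a * b + b ^ 2 * (w - 1)) * hw
  rw [CharP.intCast_eq_zero_iff K q] at h0
  exact (Nat.prime_iff_prime_int.1 hq).not_isUnit (hc.isUnit_of_dvd' dvd_rfl h0)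

lemma pd_ne3 {q : ℕ} (hq : q.Prime) (hq3 : q ≠ 3) (K : Type) [Field K] [CharP K q] :
    (3 : K) ≠ 0 := by
  have := CharP.cast_eq_zero_iff K q 3
  rw [Nat.prime_dvd_prime_iff_eq hq Nat.prime_three] at this
  intro h; exact hq3 (this.1 (by exact_mod_cast h))

lemma pd_exists_w {q : ℕ} (hq : q.Prime) (hq3 : q ≠ 3) (K : Type) [Field K] [IsAlgClosed K]
    [CharP K q] : ∃ w : K, w ^ 2 + w + 1 = 0 := by
  have : NeZero ((3 : ℕ) : K) := ⟨by exact_mod_cast pd_ne3 hq hq3 K⟩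
  obtain ⟨ζ, hζ⟩ := HasEnoughRootsOfUnity.exists_primitiveRoot K 3
  refine ⟨ζ, ?_⟩
  apply mul_left_cancel₀ (sub_ne_zero.2 (hζ.ne_one (by norm_num)))
  linear_combination hζ.pow_eq_one

lemma pd_pow_val_eq_one {K : Type} [Field K] {w : K} (hw : w ^ 2 + w + 1 = 0) (h3 : (3 : K) ≠ 0)
    {x : ZMod 3} (h : w ^ x.val = 1) : x = 0 := by
  have h1 := pd_w_ne_one hw h3
  have hk : x.val < 3 := ZMod.val_lt _
  rw [← ZMod.val_eq_zero]
  generalize x.val = k at *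
  interval_cases k
  · rfl
  · exact absurd (by simpa using h) h1
  · exfalso; apply h1
    linear_combination (-w) * h + (w - 1) * hw

lemma pd_k_even {q : ℕ} (hq : q.Prime) (hq2 : q ≠ 2) : Even ((q ^ 2 - 1) / 3) := by
  obtain ⟨m, hm⟩ := hq.odd_of_ne_two hq2
  by_cases h : (q ^ 2 - 1) % 3 = 0
  · have : 4 * (m ^ 2 + m) + 1 = q ^ 2 := by rw [hm]; ring
    rw [Nat.even_iff]; omega
  · have h3 : q = 3 := by
      by_contra hq3
      have : q % 3 ≠ 0 := fun h => hq3 ((Nat.prime_dvd_prime_iff_eq Nat.prime_three hq).1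
        (Nat.dvd_of_mod_eq_zero h)).symm
      have : q % 3 = 1 ∨ q % 3 = 2 := by omega
      have : q ^ 2 % 3 = 1 := by rcases this with h | h <;> simp [Nat.pow_mod, h]
      omega
    subst h3; decide

lemma pd_neg_pow {q : ℕ} (hq : q.Prime) (K : Type) [Field K] [CharP K q] (x : K) :
    (-x) ^ ((q ^ 2 - 1) / 3) = x ^ ((q ^ 2 - 1) / 3) := by
  by_cases h : q = 2
  · subst h
    have : (2 : K) = 0 := by exact_mod_cast CharP.cast_eq_zero K 2
    congr 1; linear_combination (-x) * this
  · exact (pd_k_even hq h).neg_pow x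

lemma pd_symbol {a b e ε z : ℤ} {p : ℕ} (hp : p.Prime) (hp3 : p ≠ 3) (hb : 3 ∣ b) (ha : ¬ 3 ∣ a)
    (hz : z ∣ 2 * a - b) (hz3 : ¬ 3 ∣ z) (hzN : IsCoprime z (a ^ 2 - a * b + b ^ 2))
    (hε : ε = 1 ∨ ε = -1) (hN : a ^ 2 - a * b + b ^ 2 ∣ 27 * e * p - ε * z ^ 2)
    (K : Type) [Field K] [IsAlgClosed K] [CharP K p] (w : K) (hw : w ^ 2 + w + 1 = 0) :
    (e = 1 → ((a : K) + b * w ^ 2) ^ ((p ^ 2 - 1) / 3) = ((a : K) + b * w) ^ ((p ^ 2 - 1) / 3)) ∧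
    (e = 2 → Odd b →
      ((a : K) + b * w ^ 2) ^ ((p ^ 2 - 1) / 3) ≠ ((a : K) + b * w) ^ ((p ^ 2 - 1) / 3)) := by
  have hpos : 0 ≤ a ^ 2 - a * b + b ^ 2 := by nlinarith [sq_nonneg (2 * a - b), sq_nonneg b]
  obtain ⟨n, hn⟩ := Int.eq_ofNat_of_zero_le hpos
  obtain ⟨c, hm, hper, hrec⟩ := pd_good_all n a b hb ha hn
  set N := a ^ 2 - a * b + b ^ 2 with hNdef
  have hc1 : c 1 = 0 := by
    have := hm 1 1 isCoprime_one_left isCoprime_one_left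
    rw [one_mul] at this
    simpa using this
  have hcm1 : c (-1) = 0 := by
    have h := hm (-1) (-1) isCoprime_one_left.neg_left isCoprime_one_left.neg_left
    rw [show (-1 : ℤ) * -1 = 1 from rfl, hc1] at h
    generalize c (-1) = x at h
    revert x; decide
  have hq0 : ∀ q : ℕ, q.Prime → q ≠ 3 → IsCoprime (q : ℤ) N → (q : ℤ) ∣ 2 * a - b →
      c q = 0 := by
    intro q hq hq3 hqN hd
    have : Fact q.Prime := ⟨hq⟩
    obtain ⟨L, _, _, _⟩ := pd_exists_field (q := q) hq
    obtain ⟨v, hv⟩ := pd_exists_w hq hq3 L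
    have h := hrec q hq hq3 hqN L v hv
    have h0 : ((2 * a - b : ℤ) : L) = 0 := (CharP.intCast_eq_zero_iff L q _).2 hd
    push_cast at h0
    have e1 : (a : L) + b * v ^ 2 = -((a : L) + b * v) := by linear_combination h0 + b * hv
    rw [e1, pd_neg_pow hq] at h
    have hne := pow_ne_zero ((q ^ 2 - 1) / 3) (pd_norm_ne hq hqN hv)
    apply pd_pow_val_eq_one hv (pd_ne3 hq hq3 L)
    apply mul_left_cancel₀ hne
    rw [← h, mul_one]
  have hznat : ∀ m : ℕ, (m : ℤ) ∣ 2 * a - b → ¬ 3 ∣ (m : ℤ) → IsCoprime (m : ℤ) N → c m = 0 := by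
    intro m
    induction m using Nat.recOnMul with
    | zero => intro _ h; simp at h
    | one => intro _ _ _; simpa using hc1
    | prime q hq =>
      intro h1 h2 h3
      exact hq0 q hq (by rintro rfl; simp at h2) h3 h1
    | mul x y hx hy =>
      intro h1 h2 h3
      push_cast at h1 h2 h3 ⊢
      rw [hm _ _ h3.of_mul_left_left h3.of_mul_left_right,
        hx (dvd_of_mul_right_dvd h1) (fun h => h2 (dvd_mul_of_dvd_left h _)) h3.of_mul_left_left,
        hy (dvd_of_mul_left_dvd h1) (fun h => h2 (dvd_mul_of_dvd_right h _)) h3.of_mul_left_right,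
        add_zero]
  have hεz : IsCoprime ε N := by
    rcases hε with rfl | rfl
    · exact isCoprime_one_left
    · exact isCoprime_one_left.neg_left
  have hcε : c ε = 0 := by rcases hε with rfl | rfl <;> assumption
  have hcz2 : c (z ^ 2) = 0 := by
    have : z ^ 2 = ((z.natAbs : ℤ)) * (z.natAbs : ℤ) := by rw [← sq, Int.natAbs_sq]
    have hcop : IsCoprime (z.natAbs : ℤ) N := by
      rcases Int.natAbs_eq z with h | h
      · rwa [← h]
      · have := hzN.neg_left; rw [h, neg_neg] at this; exact this
    rw [this, hm _ _ hcop hcop, hznat z.natAbs (by rwa [Int.natAbs_dvd])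
      (by rwa [Int.dvd_natAbs]) hcop, add_zero]
  have hcop : IsCoprime (27 * e * p) N := by
    obtain ⟨t, ht⟩ := hN
    have : 27 * e * p = ε * z ^ 2 + N * t := by linear_combination ht
    rw [this]
    exact (hεz.mul_left hzN.pow_left).add_mul_left_left t
  have hcp : IsCoprime (p : ℤ) N := hcop.of_mul_left_right
  have hce : IsCoprime e N := hcop.of_mul_left_left.of_mul_left_right
  have h27 : IsCoprime (27 : ℤ) N := hcop.of_mul_left_left.of_mul_left_left
  have h3N : IsCoprime (3 : ℤ) N := by
    have : (27 : ℤ) = 3 * 9 := by norm_num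
    rw [this] at h27; exact h27.of_mul_left_left
  have h9N : IsCoprime (3 * 3 : ℤ) N := h3N.mul_left h3N
  have hc27 : c 27 = 0 := by
    rw [show (27 : ℤ) = 3 * 3 * 3 by norm_num, hm _ _ h9N h3N, hm _ _ h3N h3N]
    generalize c 3 = x
    revert x; decide
  have hsum : c e + c p = 0 := by
    have := hper _ _ hN
    rw [hm _ _ (h27.mul_left hce) hcp, hm _ _ h27 hce, hm _ _ hεz hzN.pow_left, hc27, hcε,
      hcz2] at this
    simpa using this
  have hmain := hrec p hp hp3 hcp K w hw
  constructor
  · rintro rfl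
    rw [hc1, zero_add] at hsum
    rw [hmain, hsum]; simp
  · rintro rfl hbo heq
    rw [heq] at hmain
    have hne := pow_ne_zero ((p ^ 2 - 1) / 3) (pd_norm_ne hp hcp hw)
    have hcp0 : c p = 0 := by
      apply pd_pow_val_eq_one hw (pd_ne3 hp hp3 K)
      apply mul_left_cancel₀ hne
      rw [← hmain, mul_one]
    have hc2 : c ((2 : ℕ) : ℤ) = 0 := by rw [hcp0, add_zero] at hsum; exact_mod_cast hsum
    have : Fact (Nat.Prime 2) := ⟨Nat.prime_two⟩
    obtain ⟨L, _, _, _⟩ := pd_exists_field (q := 2) Nat.prime_two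
    obtain ⟨v, hv⟩ := pd_exists_w Nat.prime_two (by norm_num) L
    have h := hrec 2 Nat.prime_two (by norm_num) (by exact_mod_cast hce) L v hv
    rw [hc2] at h
    norm_num at h
    have h2 : (2 : L) = 0 := by exact_mod_cast CharP.cast_eq_zero L 2
    obtain ⟨m, rfl⟩ := hbo
    have hb1 : ((2 * m + 1 : ℤ) : L) = 1 := by push_cast; linear_combination m * h2
    have : (1 : L) = 0 := by
      push_cast at h hb1
      rcases h with h | h
      · linear_combination hv - h - (v) * h2
      · exfalso
        rw [h] at hb1; simp at hb1
    exact one_ne_zero this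

lemma pd_ne2 {q : ℕ} (hq : q.Prime) (hq3 : q ≠ 2) (K : Type) [Field K] [CharP K q] :
    (2 : K) ≠ 0 := by
  have := CharP.cast_eq_zero_iff K q 2
  rw [Nat.prime_dvd_prime_iff_eq hq Nat.prime_two] at this
  intro h; exact hq3 (this.1 (by exact_mod_cast h))

lemma pd_reduce : ∀ (n : ℕ) (a b c : ℤ), a.natAbs = n → 0 < a → b ^ 2 - 4 * a * c = -23 →
    ∃ x y z t : ℤ, (∀ u v : ℤ, a * u ^ 2 + b * u * v + c * v ^ 2 =
        (x * u + y * v) ^ 2 + (x * u + y * v) * (z * u + t * v) + 6 * (z * u + t * v) ^ 2) ∨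
      (∀ u v : ℤ, a * u ^ 2 + b * u * v + c * v ^ 2 =
        2 * (x * u + y * v) ^ 2 + (x * u + y * v) * (z * u + t * v) + 3 * (z * u + t * v) ^ 2) := by
  intro n
  induction n using Nat.strong_induction_on with
  | _ n ih =>
  -- first: reduced middle coefficient
  have red : ∀ (a b c : ℤ), a.natAbs = n → 0 < a → b ^ 2 - 4 * a * c = -23 → -a ≤ b → b ≤ a →
    ∃ x y z t : ℤ, (∀ u v : ℤ, a * u ^ 2 + b * u * v + c * v ^ 2 =
        (x * u + y * v) ^ 2 + (x * u + y * v) * (z * u + t * v) + 6 * (z * u + t * v) ^ 2) ∨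
      (∀ u v : ℤ, a * u ^ 2 + b * u * v + c * v ^ 2 =
        2 * (x * u + y * v) ^ 2 + (x * u + y * v) * (z * u + t * v) + 3 * (z * u + t * v) ^ 2) := by
    intro a b c han ha hD h1 h2
    have hc : 0 < c := by nlinarith [sq_nonneg b]
    by_cases hca : c < a
    · obtain ⟨x, y, z, t, h⟩ := ih c.natAbs (by omega) c b a rfl hc (by linarith)
      refine ⟨y, x, t, z, ?_⟩
      rcases h with h | h
      · left; intro u v; have := h v u; linear_combination this
      · right; intro u v; have := h v u; linear_combination this
    · push Not at hca
      have hb2 : b ^ 2 ≤ a ^ 2 := by nlinarith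
      have ha2 : a ≤ 2 := by nlinarith
      have : a = 1 ∨ a = 2 := by omega
      rcases this with rfl | rfl
      · have : b = -1 ∨ b = 0 ∨ b = 1 := by omega
        rcases this with rfl | rfl | rfl
        · have : c = 6 := by omega
          subst this
          exact ⟨-1, 0, 0, 1, Or.inl fun u v => by ring⟩
        · omega
        · have : c = 6 := by omega
          subst this
          exact ⟨1, 0, 0, 1, Or.inl fun u v => by ring⟩
      · have : b = -2 ∨ b = -1 ∨ b = 0 ∨ b = 1 ∨ b = 2 := by omega
        rcases this with rfl | rfl | rfl | rfl | rfl
        · omega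
        · have : c = 3 := by omega
          subst this
          exact ⟨-1, 0, 0, 1, Or.inr fun u v => by ring⟩
        · omega
        · have : c = 3 := by omega
          subst this
          exact ⟨1, 0, 0, 1, Or.inr fun u v => by ring⟩
        · omega
  intro a b c han ha hD
  -- b' = b - 2 a k
  have hk1 := Int.emod_nonneg (b + a) (b := 2 * a) (by omega)
  have hk2 := Int.emod_lt_of_pos (b + a) (b := 2 * a) (by omega)
  have hk3 := Int.emod_add_mul_ediv (b + a) (2 * a)
  set k := (b + a) / (2 * a)
  obtain ⟨x, y, z, t, h⟩ := red a (b - 2 * a * k) (c - b * k + a * k ^ 2) han ha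
    (by linear_combination hD) (by linarith) (by linarith)
  refine ⟨x, y + x * k, z, t + z * k, ?_⟩
  rcases h with h | h
  · left; intro u v; have := h (u + k * v) v; linear_combination this
  · right; intro u v; have := h (u + k * v) v; linear_combination this

lemma pd_forms {p : ℕ} (hp : p.Prime) (hp2 : p ≠ 2) {d : ℤ} (hd : (p : ℤ) ∣ d ^ 2 + 23) :
    (∃ X Y : ℤ, (p : ℤ) = X ^ 2 + 23 * Y ^ 2) ∨
    (∃ X Y : ℤ, Odd X ∧ Odd Y ∧ 8 * (p : ℤ) = X ^ 2 + 23 * Y ^ 2) := by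
  obtain ⟨m, hm⟩ := hp.odd_of_ne_two hp2
  have hpm : (p : ℤ) = 2 * m + 1 := by exact_mod_cast hm
  obtain ⟨b, j, hbj, hb⟩ : ∃ b j : ℤ, b = 2 * j + 1 ∧ (p : ℤ) ∣ b ^ 2 + 23 := by
    rcases Int.even_or_odd' d with ⟨j, h | h⟩
    · refine ⟨d + p, j + m, by rw [h, hpm]; ring, ?_⟩
      have e : (d + p) ^ 2 + 23 = (d ^ 2 + 23) + p * (2 * d + p) := by ring
      rw [e]; exact dvd_add hd (dvd_mul_right _ _)
    · exact ⟨d, j, h, hd⟩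
  have h4 : (4 : ℤ) ∣ b ^ 2 + 23 := ⟨j ^ 2 + j + 6, by rw [hbj]; ring⟩
  have hcop : IsCoprime (4 : ℤ) p := ⟨-(m : ℤ) ^ 2 - m, p, by rw [hpm]; ring⟩
  obtain ⟨c, hc⟩ := hcop.mul_dvd h4 hb
  obtain ⟨x, y, z, t, h⟩ := pd_reduce _ p b c rfl (by exact_mod_cast hp.pos)
    (by linear_combination hc)
  rcases h with h | h
  · left
    have h1 := h 1 0
    rcases Int.even_or_odd' z with ⟨j, hz | hz⟩
    · refine ⟨x + j, j, ?_⟩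
      subst hz; linear_combination h1
    · exfalso
      subst hz
      rcases Int.even_or_odd' x with ⟨i, hx | hx⟩ <;> subst hx <;> ring_nf at h1 <;> omega
  · right
    have h1 := h 1 0
    refine ⟨4 * x + z, z, ?_, ?_, by linear_combination 8 * h1⟩
    all_goals
      rcases Int.even_or_odd' z with ⟨j, hz | hz⟩
      · exfalso
        subst hz
        ring_nf at h1
        omega
      · first
        | exact ⟨j, hz⟩
        | exact ⟨2 * x + j, by rw [hz]; ring⟩

lemma pd_cop {X Y l : ℤ} {p : ℕ} (hp : p.Prime) (hl : Prime l)
    (h : (p : ℤ) = X ^ 2 + 23 * Y ^ 2 ∨ (Odd X ∧ 8 * (p : ℤ) = X ^ 2 + 23 * Y ^ 2))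
    (hX : l ∣ X) (hY : l ∣ Y) : False := by
  have hpZ := Nat.prime_iff_prime_int.1 hp
  have key : l ^ 2 ∣ (p : ℤ) := by
    rcases h with h | ⟨ho, h⟩
    · rw [h]; exact dvd_add (pow_dvd_pow_of_dvd hX 2) (dvd_mul_of_dvd_right (pow_dvd_pow_of_dvd hY 2) _)
    · have h8 : l ^ 2 ∣ 8 * (p : ℤ) := by
        rw [h]; exact dvd_add (pow_dvd_pow_of_dvd hX 2) (dvd_mul_of_dvd_right (pow_dvd_pow_of_dvd hY 2) _)
      have hX2 : IsCoprime X 2 := by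
        obtain ⟨j, hj⟩ := ho
        exact ⟨1, -j, by rw [hj]; ring⟩
      have hl2 : IsCoprime l 2 := hX2.of_isCoprime_of_dvd_left hX
      have : IsCoprime (l ^ 2) 8 := by
        rw [show (8 : ℤ) = 2 ^ 3 by norm_num]; exact hl2.pow
      exact this.dvd_of_dvd_mul_left h8
  obtain ⟨e, he⟩ := key
  rcases hpZ.irreducible.isUnit_or_isUnit (show (p : ℤ) = l * (l * e) by rw [he]; ring) with h | h
  · exact hl.not_isUnit h
  · exact hl.not_isUnit (isUnit_of_mul_isUnit_left h)

lemma pd_dvd3 {l X : ℤ} (hl : Prime l) (hX : ¬ 3 ∣ X) (h1 : l ∣ X) (h2 : l ∣ 3) : False := by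
  have := (hl.dvd_prime_iff_associated Int.prime_three).1 h2
  exact hX (this.symm.dvd.trans h1)

lemma pd_copA {X Y : ℤ} {p : ℕ} (hp : p.Prime) 
    (h : (p : ℤ) = X ^ 2 + 23 * Y ^ 2 ∨ (Odd X ∧ 8 * (p : ℤ) = X ^ 2 + 23 * Y ^ 2))
    (hX : ¬ 3 ∣ X) {l : ℤ} (hl : Prime l) (h1 : l ∣ X) (h2 : l ∣ X ^ 2 + 27 * Y ^ 2) : False := by
  have h3 : l ∣ 3 ^ 3 * Y ^ 2 := by
    have := dvd_sub h2 (dvd_pow h1 two_ne_zero)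
    have e : X ^ 2 + 27 * Y ^ 2 - X ^ 2 = 3 ^ 3 * Y ^ 2 := by ring
    rwa [e] at this
  rcases hl.dvd_or_dvd h3 with h4 | h4
  · exact pd_dvd3 hl hX h1 (hl.dvd_of_dvd_pow h4)
  · exact pd_cop hp hl h h1 (hl.dvd_of_dvd_pow h4)

lemma pd_copB {X Y : ℤ} {p : ℕ} (hp : p.Prime) 
    (h : (p : ℤ) = X ^ 2 + 23 * Y ^ 2 ∨ (Odd X ∧ 8 * (p : ℤ) = X ^ 2 + 23 * Y ^ 2))
    (hY : ¬ 3 ∣ Y) {l : ℤ} (hl : Prime l) (h1 : l ∣ Y) (h2 : l ∣ 625 * Y ^ 2 + 27 * X ^ 2) :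
    False := by
  have h3 : l ∣ 3 ^ 3 * X ^ 2 := by
    have := dvd_sub h2 (dvd_mul_of_dvd_right (dvd_pow h1 two_ne_zero) 625)
    have e : 625 * Y ^ 2 + 27 * X ^ 2 - 625 * Y ^ 2 = 3 ^ 3 * X ^ 2 := by ring
    rwa [e] at this
  rcases hl.dvd_or_dvd h3 with h4 | h4
  · exact pd_dvd3 hl hY h1 (hl.dvd_of_dvd_pow h4)
  · exact pd_cop hp hl h (hl.dvd_of_dvd_pow h4) h1

lemma pd_dvd2 {l n : ℤ} (hl : Prime l) (hn : Odd n) (h : l ∣ n) (h2 : l ∣ 2) : False := by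
  have := (hl.dvd_prime_iff_associated Int.prime_two).1 h2
  have := this.symm.dvd.trans h
  obtain ⟨j, rfl⟩ := hn
  omega

lemma pd_three {X Y : ℤ} {p : ℕ} (hp : p.Prime) 
    (h : (p : ℤ) = X ^ 2 + 23 * Y ^ 2 ∨ (Odd X ∧ 8 * (p : ℤ) = X ^ 2 + 23 * Y ^ 2))
    (hX : 3 ∣ X) : ¬ 3 ∣ Y := fun hY => pd_cop hp Int.prime_three h hX hY

/-- the first key statement -/
lemma pd_key1 {X Y : ℤ} {p : ℕ} (hp : p.Prime) (hp2 : p ≠ 2) (hp3 : p ≠ 3)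
    (h : (p : ℤ) = X ^ 2 + 23 * Y ^ 2)
    (K : Type) [Field K] [IsAlgClosed K] [CharP K p] (w : K) (hw : w ^ 2 + w + 1 = 0) :
    ((X : K) + 3 * Y * (1 + 2 * w)) ^ ((p ^ 2 - 1) / 3) =
      ((X : K) - 3 * Y * (1 + 2 * w)) ^ ((p ^ 2 - 1) / 3) ∨ 
    ((25 * Y : K) + 3 * X * (1 + 2 * w)) ^ ((p ^ 2 - 1) / 3) =
      ((25 * Y : K) - 3 * X * (1 + 2 * w)) ^ ((p ^ 2 - 1) / 3) := by
  obtain ⟨m, hm⟩ := hp.odd_of_ne_two hp2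
  have hpm : (p : ℤ) = 2 * m + 1 := by exact_mod_cast hm
  by_cases hX : 3 ∣ X
  · right
    have hY := pd_three hp (Or.inl h) hX
    have := (pd_symbol (a := 25 * Y + 3 * X) (b := 6 * X) (e := 1) (ε := -1) (z := 2 * Y) hp hp3
      (by omega) (by omega) ⟨25, by ring⟩ (by omega) (by
        apply isCoprime_of_prime_dvd
        · rintro ⟨h1, -⟩; apply hY; omega
        · intro l hl h1 h2
          have e : (25 * Y + 3 * X) ^ 2 - (25 * Y + 3 * X) * (6 * X) + (6 * X) ^ 2 =
            625 * Y ^ 2 + 27 * X ^ 2 := by ring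
          rw [e] at h2
          rcases hl.dvd_or_dvd h1 with h1 | h1
          · exact pd_dvd2 hl ⟨27 * m + 13 + 2 * Y ^ 2, by linear_combination 27 * hpm - 27 * h⟩ h2 h1
          · exact pd_copB hp (Or.inl h) hY hl h1 h2)
      (Or.inr rfl) ⟨1, by rw [h]; ring⟩ K w hw).1 rfl
    push_cast at this
    convert this.symm using 2
    · ring
    · linear_combination (-6 * X : K) * hw
  · left
    have := (pd_symbol (a := X - 3 * Y) (b := -6 * Y) (e := 1) (ε := 1) (z := 2 * X) hp hp3
      (by omega) (by omega) ⟨1, by ring⟩ (by omega) (by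
        apply isCoprime_of_prime_dvd
        · rintro ⟨h1, -⟩; apply hX; omega
        · intro l hl h1 h2
          have e : (X - 3 * Y) ^ 2 - (X - 3 * Y) * (-6 * Y) + (-6 * Y) ^ 2 =
            X ^ 2 + 27 * Y ^ 2 := by ring
          rw [e] at h2
          rcases hl.dvd_or_dvd h1 with h1 | h1
          · exact pd_dvd2 hl ⟨m + 2 * Y ^ 2, by linear_combination hpm - h⟩ h2 h1
          · exact pd_copA hp (Or.inl h) hX hl h1 h2)
      (Or.inl rfl) ⟨23, by rw [h]; ring⟩ K w hw).1 rfl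
    push_cast at this
    convert this using 2
    · linear_combination (6 * Y : K) * hw
    · ring

lemma pd_key2 {X Y : ℤ} {p : ℕ} (hp : p.Prime) (hp2 : p ≠ 2) (hp3 : p ≠ 3)
    (hXo : Odd X) (hYo : Odd Y)
    (h : 8 * (p : ℤ) = X ^ 2 + 23 * Y ^ 2)
    (K : Type) [Field K] [IsAlgClosed K] [CharP K p] (w : K) (hw : w ^ 2 + w + 1 = 0) :
    ((X : K) + 3 * Y * (1 + 2 * w)) ^ ((p ^ 2 - 1) / 3) ≠
      ((X : K) - 3 * Y * (1 + 2 * w)) ^ ((p ^ 2 - 1) / 3) ∨ 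
    ((25 * Y : K) + 3 * X * (1 + 2 * w)) ^ ((p ^ 2 - 1) / 3) ≠
      ((25 * Y : K) - 3 * X * (1 + 2 * w)) ^ ((p ^ 2 - 1) / 3) := by
  obtain ⟨i, hi⟩ := id hXo
  obtain ⟨j, hj⟩ := id hYo
  have h' : 2 * (p : ℤ) = i ^ 2 + i + 6 + 23 * (j ^ 2 + j) := by
    have : 4 * (2 * (p : ℤ)) = 4 * (i ^ 2 + i + 6 + 23 * (j ^ 2 + j)) := by
      rw [hi, hj] at h; linear_combination h
    linarith
  by_cases hX : 3 ∣ X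
  · right
    have hY := pd_three hp (Or.inr ⟨hXo, h⟩) hX
    have := (pd_symbol (a := 25 * j + 3 * i + 14) (b := 3 * X) (e := 2) (ε := -1) (z := Y) hp hp3
      (by omega) (by omega) ⟨25, by rw [hi, hj]; ring⟩ (by omega) (by
        apply isCoprime_of_prime_dvd
        · rintro ⟨h1, -⟩; apply hY; omega
        · intro l hl h1 h2
          have e : 4 * ((25 * j + 3 * i + 14) ^ 2 - (25 * j + 3 * i + 14) * (3 * X) + (3 * X) ^ 2) =
            625 * Y ^ 2 + 27 * X ^ 2 := by rw [hi, hj]; ring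
          have h2 := dvd_mul_of_dvd_right h2 4
          rw [e] at h2
          exact pd_copB hp (Or.inr ⟨hXo, h⟩) hY hl h1 h2)
      (Or.inr rfl) ⟨1, by rw [hi, hj]; linear_combination 27 * h'⟩ K w hw).2 rfl
      (Odd.mul (by decide) hXo)
    intro h0
    apply this
    apply mul_left_cancel₀ (pow_ne_zero ((p ^ 2 - 1) / 3) (pd_ne2 hp hp2 K))
    rw [← mul_pow, ← mul_pow]
    convert h0.symm using 2
    · rw [hi, hj]; push_cast; linear_combination (6 * (2 * i + 1) : K) * hw
    · rw [hi, hj]; push_cast; ring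
  · left
    have := (pd_symbol (a := i - 3 * j - 1) (b := -3 * Y) (e := 2) (ε := 1) (z := X) hp hp3
      (by omega) (by omega) ⟨1, by rw [hi, hj]; ring⟩ (by omega) (by
        apply isCoprime_of_prime_dvd
        · rintro ⟨h1, -⟩; apply hX; omega
        · intro l hl h1 h2
          have e : 4 * ((i - 3 * j - 1) ^ 2 - (i - 3 * j - 1) * (-3 * Y) + (-3 * Y) ^ 2) =
            X ^ 2 + 27 * Y ^ 2 := by rw [hi, hj]; ring
          have h2 := dvd_mul_of_dvd_right h2 4
          rw [e] at h2
          exact pd_copA hp (Or.inr ⟨hXo, h⟩) hX hl h1 h2)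
      (Or.inl rfl) ⟨23, by rw [hi, hj]; linear_combination 27 * h'⟩ K w hw).2 rfl
      (Odd.mul (by decide) hYo)
    intro h0
    apply this
    apply mul_left_cancel₀ (pow_ne_zero ((p ^ 2 - 1) / 3) (pd_ne2 hp hp2 K))
    rw [← mul_pow, ← mul_pow]
    convert h0 using 2
    · rw [hi, hj]; push_cast; linear_combination (-6 * (2 * j + 1) : K) * hw
    · rw [hi, hj]; push_cast; ring

lemma pd_roots (K : Type) [Field K] [IsAlgClosed K] :
    ∃ α β γ : K, α + β + γ = 0 ∧ α * β + β * γ + γ * α = -1 ∧ α * β * γ = 1 := by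
  obtain ⟨α, hα⟩ := IsAlgClosed.exists_root (Polynomial.X ^ 3 - Polynomial.X - 1 : Polynomial K) (by
    have : (Polynomial.X ^ 3 - Polynomial.X - 1 : Polynomial K).degree = 3 := by compute_degree!
    rw [this]; decide)
  obtain ⟨β, hβ⟩ := IsAlgClosed.exists_root
    (Polynomial.X ^ 2 + Polynomial.C α * Polynomial.X + Polynomial.C (α ^ 2 - 1) : Polynomial K) (by
    have : (Polynomial.X ^ 2 + Polynomial.C α * Polynomial.X +
      Polynomial.C (α ^ 2 - 1) : Polynomial K).degree = 2 := by compute_degree!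
    rw [this]; decide)
  simp only [Polynomial.IsRoot, Polynomial.eval_add, Polynomial.eval_sub, Polynomial.eval_pow,
    Polynomial.eval_X, Polynomial.eval_one, Polynomial.eval_mul, Polynomial.eval_C] at hα hβ
  refine ⟨α, β, -α - β, by ring, by linear_combination -hβ, by linear_combination hα - α * hβ⟩

section
variable {K : Type} [Field K] {α β γ : K}

lemma pd_root (h1 : α + β + γ = 0) (h2 : α * β + β * γ + γ * α = -1) (h3 : α * β * γ = 1) (x : K) :
    x ^ 3 - x - 1 = (x - α) * (x - β) * (x - γ) := by
  linear_combination (x ^ 2) * h1 - x * h2 + h3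

lemma pd_disc (h1 : α + β + γ = 0) (h2 : α * β + β * γ + γ * α = -1) (h3 : α * β * γ = 1) :
    ((α - β) * (β - γ) * (γ - α)) ^ 2 = -23 := by
  have hγ : γ = -α - β := by linear_combination h1
  subst hγ
  have a1 : α ^ 2 + α * β + β ^ 2 = 1 := by linear_combination -h2
  have a2 : α * β * (α + β) = -1 := by linear_combination -h3
  have : ((α - β) * (β - (-α - β)) * (-α - β - α)) ^ 2 =
    4 * (α ^ 2 + α * β + β ^ 2) ^ 3 - 27 * (α * β * (α + β)) ^ 2 := by ring
  rw [this, a1, a2]; norm_num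

lemma pd_B {B : ℕ → ℤ} (h0 : B 0 = 0) (hB1 : B 1 = 1) (hB2 : B 2 = 1)
    (hrec : ∀ n, 3 ≤ n → B n = B (n - 2) + B (n - 3))
    (h1 : α + β + γ = 0) (h2 : α * β + β * γ + γ * α = -1) (h3 : α * β * γ = 1) (n : ℕ) :
    α ^ (n + 3) * (β - γ) + β ^ (n + 3) * (γ - α) + γ ^ (n + 3) * (α - β) =
      -((α - β) * (β - γ) * (γ - α)) * (B n : K) := by
  have ha : α ^ 3 = α + 1 := by linear_combination pd_root h1 h2 h3 α
  have hb : β ^ 3 = β + 1 := by linear_combination pd_root h1 h2 h3 β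
  have hc : γ ^ 3 = γ + 1 := by linear_combination pd_root h1 h2 h3 γ
  induction n using Nat.strong_induction_on with
  | _ n ih =>
  match n, ih with
  | 0, _ => 
    simp only [zero_add, ha, hb, hc, h0]; push_cast; ring
  | 1, _ =>
    simp only [hB1, pow_add, pow_one, ha, hb, hc]; push_cast; ring
  | 2, _ =>
    simp only [hB2, pow_add, ha, hb, hc]; push_cast
    linear_combination ha * (β - γ) + hb * (γ - α) + hc * (α - β)
  | m + 3, ih =>
    rw [hrec (m + 3) (by omega), show m + 3 - 2 = m + 1 by omega, show m + 3 - 3 = m by omega]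
    have i1 := ih m (by omega)
    have i2 := ih (m + 1) (by omega)
    push_cast
    rw [pow_add _ (m + 3) 3, pow_add _ (m + 3) 3, pow_add _ (m + 3) 3, ha, hb, hc]
    have e : ∀ x : K, x ^ (m + 1 + 3) = x ^ (m + 3) * x := fun x => by ring
    rw [e, e, e] at i2
    linear_combination i1 + i2

lemma pd_perm {p : ℕ} [Fact p.Prime] [CharP K p]
    (h1 : α + β + γ = 0) (h2 : α * β + β * γ + γ * α = -1) (h3 : α * β * γ = 1)
    (h23 : (23 : K) ≠ 0) :
    (α ^ p = α ∧ β ^ p = β ∧ γ ^ p = γ) ∨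
    (((α - β) * (β - γ) * (γ - α)) ^ p = - ((α - β) * (β - γ) * (γ - α)) ∧
      α ^ p * α ^ 2 * (β - γ) + β ^ p * β ^ 2 * (γ - α) + γ ^ p * γ ^ 2 * (α - β) ≠ 0) ∨
    (α ^ p * α ^ 2 * (β - γ) + β ^ p * β ^ 2 * (γ - α) + γ ^ p * γ ^ 2 * (α - β) ≠ 0 ∧
      ((α ^ p = β ∧ β ^ p = γ ∧ γ ^ p = α) ∨ (α ^ p = γ ∧ β ^ p = α ∧ γ ^ p = β))) := by
  have ha : α ^ 3 = α + 1 := by linear_combination pd_root h1 h2 h3 α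
  have hb : β ^ 3 = β + 1 := by linear_combination pd_root h1 h2 h3 β
  have hc : γ ^ 3 = γ + 1 := by linear_combination pd_root h1 h2 h3 γ
  have hD := pd_disc h1 h2 h3
  have hD0 : (α - β) * (β - γ) * (γ - α) ≠ 0 := by
    intro h; rw [h] at hD; apply h23; linear_combination hD
  have hab : α ≠ β := by rintro rfl; simp at hD0
  have hbc : β ≠ γ := by rintro rfl; simp at hD0
  have hca : γ ≠ α := by rintro rfl; simp at hD0
  have ha0 : α ≠ 0 := by rintro rfl; simp at h3
  have hb0 : β ≠ 0 := by rintro rfl; simp at h3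
  have hc0 : γ ≠ 0 := by rintro rfl; simp at h3
  have fr : ∀ x : K, x ^ 3 = x + 1 → x ^ p = α ∨ x ^ p = β ∨ x ^ p = γ := by
    intro x hx
    have : (x ^ p) ^ 3 = x ^ p + 1 := by
      rw [← pow_mul, mul_comm, pow_mul, hx, add_pow_char, one_pow]
    have h := pd_root h1 h2 h3 (x ^ p)
    rw [this] at h
    have h : (x ^ p - α) * (x ^ p - β) * (x ^ p - γ) = 0 := by rw [← h]; ring
    rcases mul_eq_zero.1 h with h | h
    · rcases mul_eq_zero.1 h with h | h
      · exact Or.inl (sub_eq_zero.1 h)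
      · exact Or.inr (Or.inl (sub_eq_zero.1 h))
    · exact Or.inr (Or.inr (sub_eq_zero.1 h))
  have inj : ∀ x y : K, x ^ p = y ^ p → x = y := fun x y h => frobenius_inj K p h
  have hab' : α ^ p ≠ β ^ p := fun h => hab (inj _ _ h)
  have hbc' : β ^ p ≠ γ ^ p := fun h => hbc (inj _ _ h)
  have hca' : γ ^ p ≠ α ^ p := fun h => hca (inj _ _ h)
  rw [mul_pow, mul_pow, sub_pow_char, sub_pow_char, sub_pow_char]
  have fa := fr α ha
  have fb := fr β hb
  have fc := fr γ hc
  generalize α ^ p = x at *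
  generalize β ^ p = y at *
  generalize γ ^ p = z at *
  rcases fa with hx | hx | hx <;> rcases fb with hy | hy | hy <;>
    rcases fc with hz | hz | hz <;> 
    first
    | exact absurd (hx.trans hy.symm) hab'
    | exact absurd (hy.trans hz.symm) hbc'
    | exact absurd (hz.trans hx.symm) hca'
    | skip
  · exact Or.inl ⟨hx, hy, hz⟩
  · refine Or.inr (Or.inl ⟨by rw [hx, hy, hz]; ring, ?_⟩)
    have : x * α ^ 2 * (β - γ) + y * β ^ 2 * (γ - α) + z * γ ^ 2 * (α - β) = (β - γ) * α := by
      rw [hx, hy, hz]; linear_combination (β - γ) * ha - (β - γ) * h3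
    rw [this]; exact mul_ne_zero (sub_ne_zero.2 hbc) ha0
  · refine Or.inr (Or.inl ⟨by rw [hx, hy, hz]; ring, ?_⟩)
    have : x * α ^ 2 * (β - γ) + y * β ^ 2 * (γ - α) + z * γ ^ 2 * (α - β) = (α - β) * γ := by
      rw [hx, hy, hz]; linear_combination (α - β) * hc - (α - β) * h3
    rw [this]; exact mul_ne_zero (sub_ne_zero.2 hab) hc0
  · refine Or.inr (Or.inr ⟨?_, Or.inl ⟨hx, hy, hz⟩⟩)
    have : x * α ^ 2 * (β - γ) + y * β ^ 2 * (γ - α) + z * γ ^ 2 * (α - β) = 1 := by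
      rw [hx, hy, hz]
      linear_combination (α * β + β * γ + γ * α - 1) * h2 - 3 * (α * β * γ) * h1
    rw [this]; exact one_ne_zero
  · refine Or.inr (Or.inr ⟨?_, Or.inr ⟨hx, hy, hz⟩⟩)
    have : x * α ^ 2 * (β - γ) + y * β ^ 2 * (γ - α) + z * γ ^ 2 * (α - β) = -1 := by
      rw [hx, hy, hz]
      linear_combination -(α * β + β * γ + γ * α - 1) * h2 + 3 * (α * β * γ) * h1
    rw [this]; exact neg_ne_zero.2 one_ne_zero
  · refine Or.inr (Or.inl ⟨by rw [hx, hy, hz]; ring, ?_⟩)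
    have : x * α ^ 2 * (β - γ) + y * β ^ 2 * (γ - α) + z * γ ^ 2 * (α - β) = (γ - α) * β := by
      rw [hx, hy, hz]; linear_combination (γ - α) * hb - (γ - α) * h3
    rw [this]; exact mul_ne_zero (sub_ne_zero.2 hca) hb0
end

lemma pd_p2 {p : ℕ} (hp : p.Prime) (hp3 : p ≠ 3) : 3 * ((p ^ 2 - 1) / 3) + 1 = p ^ 2 := by
  have hmod : p ^ 2 % 3 = 1 := by
    have : p % 3 ≠ 0 := fun h => hp3 ((Nat.prime_dvd_prime_iff_eq Nat.prime_three hp).1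
      (Nat.dvd_of_mod_eq_zero h)).symm
    have : p % 3 = 1 ∨ p % 3 = 2 := by omega
    rcases this with h | h <;> simp [Nat.pow_mod, h]
  omega

lemma pd_w_pow {p : ℕ} (hp : p.Prime) (hp3 : p ≠ 3) {K : Type} [Field K] {w : K}
    (hw : w ^ 2 + w + 1 = 0) : w ^ (p ^ 2) = w := by
  rw [← pd_p2 hp hp3, pow_succ, pow_mul, pd_w3 hw, one_pow, one_mul]

lemma pd_bridge {p : ℕ} (hp : p.Prime) (hp2 : p ≠ 2) (hp3 : p ≠ 3) {K : Type} [Field K] [CharP K p]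
    {w D X Y : K} (hw : w ^ 2 + w + 1 = 0) (hD : D ^ 2 = -23) (hDp : D ^ p = D) (hY : Y ≠ 0)
    (hX : X = D * Y) :
    ((X + 3 * Y * (1 + 2 * w)) ^ ((p ^ 2 - 1) / 3) =
      (X - 3 * Y * (1 + 2 * w)) ^ ((p ^ 2 - 1) / 3) ↔ 
      (9 + (1 + 2 * w) * D) ^ ((p ^ 2 - 1) / 3) = (9 - (1 + 2 * w) * D) ^ ((p ^ 2 - 1) / 3)) ∧
    ((25 * Y + 3 * X * (1 + 2 * w)) ^ ((p ^ 2 - 1) / 3) =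
      (25 * Y - 3 * X * (1 + 2 * w)) ^ ((p ^ 2 - 1) / 3) ↔ 
      (9 + (1 + 2 * w) * D) ^ ((p ^ 2 - 1) / 3) = (9 - (1 + 2 * w) * D) ^ ((p ^ 2 - 1) / 3)) := by
  have : Fact p.Prime := ⟨hp⟩
  have h20 := pd_ne2 hp hp2 K
  have h30 := pd_ne3 hp hp3 K
  set s := 1 + 2 * w with hs
  have hs2 : s ^ 2 = -3 := by rw [hs]; linear_combination 4 * hw
  have hs0 : s ≠ 0 := by intro h; rw [h] at hs2; apply h30; linear_combination hs2
  have hsp : s ^ (p ^ 2) = s := by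
    rw [hs, add_pow_char_pow, mul_pow, one_pow, pd_w_pow hp hp3 hw]
    congr 2
    rw [pow_two, pow_mul]
    have : (2 : K) ^ p = 2 := by
      have := map_natCast (frobenius K p) 2
      rw [frobenius_def] at this
      exact_mod_cast this
    rw [this, this]
  have h9 : (9 : K) ^ (p ^ 2) = 9 := by
    rw [pow_two, pow_mul]
    have : (9 : K) ^ p = 9 := by
      have := map_natCast (frobenius K p) 9
      rw [frobenius_def] at this
      exact_mod_cast this
    rw [this, this]
  have hDp2 : D ^ (p ^ 2) = D := by rw [pow_two, pow_mul, hDp, hDp]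
  have hk := pd_p2 hp hp3
  set k := (p ^ 2 - 1) / 3 with hkdef
  have hprod : (9 + s * D) * (9 - s * D) = 12 := by
    linear_combination (-D ^ 2) * hs2 + 3 * hD
  have h12 : (12 : K) ≠ 0 := by
    rw [show (12 : K) = 2 * 2 * 3 by norm_num]; exact mul_ne_zero (mul_ne_zero h20 h20) h30
  have hu0 : 9 + s * D ≠ 0 := by intro h; rw [h, zero_mul] at hprod; exact h12 hprod.symm
  have hv0 : 9 - s * D ≠ 0 := by intro h; rw [h, mul_zero] at hprod; exact h12 hprod.symm
  have hu3 : ((9 + s * D) ^ k) ^ 3 = 1 := by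
    rw [← pow_mul, mul_comm k]
    apply mul_right_cancel₀ hu0
    rw [← pow_succ, hk, add_pow_char_pow, mul_pow, h9, hsp, hDp2, one_mul]
  have hv3 : ((9 - s * D) ^ k) ^ 3 = 1 := by
    rw [← pow_mul, mul_comm k]
    apply mul_right_cancel₀ hv0
    rw [← pow_succ, hk, sub_pow_char_pow, mul_pow, h9, hsp, hDp2, one_mul]
  constructor
  · have e1 : s * (X + 3 * Y * s) = Y * (-(9 - s * D)) := by
      rw [hX]; linear_combination (3 * Y) * hs2
    have e2 : s * (X - 3 * Y * s) = Y * (9 + s * D) := by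
      rw [hX]; linear_combination (-3 * Y) * hs2
    have e1' := congrArg (· ^ k) e1
    have e2' := congrArg (· ^ k) e2
    simp only [mul_pow] at e1' e2'
    rw [pd_neg_pow hp] at e1'
    have hsk := pow_ne_zero k hs0
    have hYk := pow_ne_zero k hY
    constructor
    · intro h
      rw [h, e2'] at e1'
      exact mul_left_cancel₀ hYk e1'
    · intro h
      apply mul_left_cancel₀ hsk
      rw [e1', e2', h]
  · have e1 : 6 * (25 * Y + 3 * X * s) = Y * ((9 + s * D) ^ 2) := by
      rw [hX]; linear_combination (-Y * D ^ 2) * hs2 + 3 * Y * hD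
    have e2 : 6 * (25 * Y - 3 * X * s) = Y * ((9 - s * D) ^ 2) := by
      rw [hX]; linear_combination (-Y * D ^ 2) * hs2 + 3 * Y * hD
    have e1' := congrArg (· ^ k) e1
    have e2' := congrArg (· ^ k) e2
    simp only [mul_pow] at e1' e2'
    rw [← pow_mul, mul_comm 2 k, pow_mul] at e1' e2'
    have h6 : (6 : K) ≠ 0 := by
      rw [show (6 : K) = 2 * 3 by norm_num]; exact mul_ne_zero h20 h30
    have h6k := pow_ne_zero k h6
    have hYk := pow_ne_zero k hY
    constructor
    · intro h
      rw [h, e2'] at e1'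
      have := mul_left_cancel₀ hYk e1'
      generalize (9 + s * D) ^ k = u at *
      generalize (9 - s * D) ^ k = v at *
      linear_combination (-u) * hu3 + v * hv3 - (u ^ 2 + v ^ 2) * this
    · intro h
      apply mul_left_cancel₀ h6k
      rw [e1', e2', h]

lemma pd_cube {K : Type} [Field K] {α β γ v : K} (hv : v ^ 2 + v + 1 = 0)
    (h1 : α + β + γ = 0) (h3 : α * β * γ = 1) :
    2 * (α + v * β + v ^ 2 * γ) ^ 3 =
      3 * (9 - (1 + 2 * v) * ((α - β) * (β - γ) * (γ - α))) := by
  have hR : α + v * β + v ^ 2 * γ = (2 + v) * α + (1 + 2 * v) * β := by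
    linear_combination γ * hv - (v + 1) * h1
  have hγ : γ = -α - β := by linear_combination h1
  have hA : (2 + v) ^ 2 = 3 + 3 * v := by linear_combination hv
  have hS : (1 + 2 * v) ^ 2 = -3 := by linear_combination 4 * hv
  have hR3 : ((2 + v) * α + (1 + 2 * v) * β) ^ 3 = (3 + 6 * v) * α ^ 3 + 3 * (3 * v - 3) * α ^ 2 * β
      + 3 * (-6 - 3 * v) * α * β ^ 2 - (3 + 6 * v) * β ^ 3 := by
    linear_combination α ^ 3 * ((2 + v) * hA + 3 * hv) + 3 * α ^ 2 * β * ((1 + 2 * v) * hA + 6 * hv)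
      + 3 * α * β ^ 2 * (2 + v) * hS + β ^ 3 * (1 + 2 * v) * hS
  rw [hR, hR3, show (9 : K) = 9 * (α * β * γ) by rw [h3, mul_one], hγ]
  ring

lemma pd_res {p : ℕ} (hp : p.Prime) (hp2 : p ≠ 2) (hp3 : p ≠ 3) {K : Type} [Field K] [CharP K p]
    {α β γ w ε ε' : K} (hw : w ^ 2 + w + 1 = 0)
    (h1 : α + β + γ = 0) (h2 : α * β + β * γ + γ * α = -1) (h3 : α * β * γ = 1)
    (hR : α ^ (p ^ 2) + w * β ^ (p ^ 2) + w ^ 2 * γ ^ (p ^ 2) = ε * (α + w * β + w ^ 2 * γ))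
    (hR' : α ^ (p ^ 2) + w ^ 2 * β ^ (p ^ 2) + w * γ ^ (p ^ 2) = ε' * (α + w ^ 2 * β + w * γ)) :
    (9 + (1 + 2 * w) * ((α - β) * (β - γ) * (γ - α))) ^ ((p ^ 2 - 1) / 3) =
      (9 - (1 + 2 * w) * ((α - β) * (β - γ) * (γ - α))) ^ ((p ^ 2 - 1) / 3) ↔ ε' = ε := by
  have : Fact p.Prime := ⟨hp⟩
  have h20 := pd_ne2 hp hp2 K
  have h30 := pd_ne3 hp hp3 K
  have hk := pd_p2 hp hp3
  set k := (p ^ 2 - 1) / 3 with hkdef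
  have hγ : γ = -α - β := by linear_combination h1
  have w3 := pd_w3 hw
  have hww : w ^ 2 = -1 - w := by linear_combination hw
  have hRR : (α + w * β + w ^ 2 * γ) * (α + w ^ 2 * β + w * γ) = 3 := by
    have : (α + w * β + w ^ 2 * γ) * (α + w ^ 2 * β + w * γ) =
      (α + β + γ) ^ 2 - 3 * (α * β + β * γ + γ * α) := by
      rw [hww]; ring_nf; rw [hww]; ring
    rw [this, h1, h2]; norm_num
  have cu : ∀ R ε : K, R ≠ 0 → R ^ (p ^ 2) = ε * R → (R ^ 3) ^ k = ε := by
    intro R ε h0 h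
    rw [← pow_mul]
    apply mul_right_cancel₀ h0
    rw [← pow_succ, hk, h]
  have e1 : 2 * (α + w * β + w ^ 2 * γ) ^ 3 =
      3 * (9 - (1 + 2 * w) * ((α - β) * (β - γ) * (γ - α))) := by
    exact pd_cube hw h1 h3
  have e2 : 2 * (α + w ^ 2 * β + w * γ) ^ 3 =
      3 * (9 + (1 + 2 * w) * ((α - β) * (β - γ) * (γ - α))) := by
    have := pd_cube (pd_wsq hw) h1 h3
    rw [show (w ^ 2) ^ 2 = w by linear_combination w * w3,
      show 1 + 2 * w ^ 2 = -(1 + 2 * w) by linear_combination 2 * hw] at this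
    rw [this]; ring
  have hw2 : w ^ (p ^ 2) = w := pd_w_pow hp hp3 hw
  have hw2' : (w ^ 2) ^ (p ^ 2) = w ^ 2 := by rw [← pow_mul, mul_comm, pow_mul, hw2]
  have c1 := cu (α + w * β + w ^ 2 * γ) ε (fun h => h30 (by rw [← hRR, h, zero_mul])) (by
    rw [add_pow_char_pow, add_pow_char_pow, mul_pow, mul_pow, hw2, hw2', hR])
  have c2 := cu (α + w ^ 2 * β + w * γ) ε' (fun h => h30 (by rw [← hRR, h, mul_zero])) (by
    rw [add_pow_char_pow, add_pow_char_pow, mul_pow, mul_pow, hw2, hw2', hR'])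
  have f1 := congrArg (· ^ k) e1
  have f2 := congrArg (· ^ k) e2
  beta_reduce at f1 f2
  rw [mul_pow, mul_pow 3, c1] at f1
  rw [mul_pow, mul_pow 3, c2] at f2
  constructor
  · intro h
    rw [h, ← f1] at f2
    exact mul_left_cancel₀ (pow_ne_zero k h20) f2
  · intro h
    rw [h, f1] at f2
    exact (mul_left_cancel₀ (pow_ne_zero k h30) f2).symm

lemma pd_small {B : ℕ → ℤ}
    (h0 : B 0 = 0) (h1 : B 1 = 1) (h2 : B 2 = 1)
    (hrec : ∀ n, 3 ≤ n → B n = B (n - 2) + B (n - 3)) : B 22 = 265 := by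
  have r : ∀ n, B (n + 3) = B (n + 1) + B n := fun n => hrec (n + 3) (by omega)
  have a3 := r 0
  have a4 := r 1
  have a5 := r 2
  have a6 := r 3
  have a7 := r 4
  have a8 := r 5
  have a9 := r 6
  have a10 := r 7
  have a11 := r 8
  have a12 := r 9
  have a13 := r 10
  have a14 := r 11
  have a15 := r 12
  have a16 := r 13
  have a17 := r 14
  have a18 := r 15
  have a19 := r 16
  have a20 := r 17
  have a21 := r 18
  have a22 := r 19
  norm_num at *
  omega

lemma pd_nosol {X Y n : ℤ} (hX : X ≠ 0) (h : n = X ^ 2 + 23 * Y ^ 2) (hn : n = 2 ∨ n = 3 ∨ n = 23) :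
    False := by
  by_cases hY : Y = 0
  · subst hY
    have hn : n ≤ 23 := by omega
    have h1 : -5 < X := by nlinarith
    have h2 : X < 5 := by nlinarith
    interval_cases X <;> omega
  · have : 0 < X ^ 2 := by positivity
    have : 0 < Y ^ 2 := by positivity
    omega

lemma pd_sign {p : ℕ} (hp : p.Prime) {K : Type} [Field K] [CharP K p] {D : K} (hD : D ^ 2 = -23)
    {X Y : ℤ} (h : (p : ℤ) = X ^ 2 + 23 * Y ^ 2 ∨ (Odd X ∧ 8 * (p : ℤ) = X ^ 2 + 23 * Y ^ 2)) :
    (Y : K) ≠ 0 ∧ ((X : K) = D * Y ∨ ((-X : ℤ) : K) = D * Y) := by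
  have hpK : ((p : ℤ) : K) = 0 := by exact_mod_cast CharP.cast_eq_zero K p
  have hsq : (X : K) ^ 2 = (D * Y) ^ 2 := by
    have : ((X ^ 2 + 23 * Y ^ 2 : ℤ) : K) = 0 := by
      rcases h with h | ⟨-, h⟩
      · rw [← h, hpK]
      · rw [← h, Int.cast_mul, hpK, mul_zero]
    push_cast at this
    rw [mul_pow, hD]; linear_combination this
  constructor
  · intro hY
    have hX : (X : K) = 0 := by
      rw [hY, mul_zero] at hsq; exact pow_eq_zero_iff two_ne_zero |>.1 (by rw [hsq]; ring)
    exact pd_cop hp (Nat.prime_iff_prime_int.1 hp) h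
      ((CharP.intCast_eq_zero_iff K p X).1 hX) ((CharP.intCast_eq_zero_iff K p Y).1 hY)
  · rcases sq_eq_sq_iff_eq_or_eq_neg.1 hsq with h | h
    · exact Or.inl h
    · right; push_cast; rw [h, neg_neg]

lemma pd_sqr {p : ℕ} (hp : p.Prime) (hp2 : p ≠ 2) (h23 : p ≠ 23) {K : Type} [Field K] [CharP K p]
    {D : K} (hD : D ^ 2 = -23) (hD0 : D ≠ 0) (hDp : D ^ p = D) : ∃ d : ℤ, (p : ℤ) ∣ d ^ 2 + 23 := by
  have : Fact p.Prime := ⟨hp⟩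
  obtain ⟨m, hm⟩ := hp.odd_of_ne_two hp2
  have e : (-23 : K) ^ (p / 2) = 1 := by
    rw [← hD, ← pow_mul]
    apply mul_right_cancel₀ hD0
    rw [← pow_succ, one_mul, show 2 * (p / 2) + 1 = p by omega, hDp]
  have e' : (-23 : ZMod p) ^ (p / 2) = 1 := by
    apply (ZMod.castHom (dvd_refl p) K).injective
    rw [map_pow, map_neg, map_ofNat, map_one, e]
  have hne : (-23 : ZMod p) ≠ 0 := by
    intro h; rw [h, zero_pow (by have := hp.two_le; omega)] at e'; exact zero_ne_one e'
  obtain ⟨r, hr⟩ := (ZMod.euler_criterion p hne).2 e'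
  refine ⟨r.val, ?_⟩
  rw [← ZMod.intCast_zmod_eq_zero_iff_dvd] 
  push_cast
  rw [ZMod.natCast_zmod_val]
  linear_combination -hr

theorem padovan_divisibility (B : ℕ → ℤ)
    (h0 : B 0 = 0) (h1 : B 1 = 1) (h2 : B 2 = 1)
    (hrec : ∀ n, 3 ≤ n → B n = B (n - 2) + B (n - 3))
    (p : ℕ) (hp : p.Prime) :
    (p : ℤ) ∣ B (p - 1) ↔ ∃ X Y : ℤ, X ≠ 0 ∧ (p : ℤ) = X ^ 2 + 23 * Y ^ 2 := by
  by_cases hp2 : p = 2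
  · subst hp2
    constructor
    · intro h; norm_num [h1] at h
    · rintro ⟨X, Y, hX, h⟩; exact (pd_nosol hX h (by simp)).elim
  by_cases hp3 : p = 3
  · subst hp3
    constructor
    · intro h; norm_num [h2] at h
    · rintro ⟨X, Y, hX, h⟩; exact (pd_nosol hX h (by simp)).elim
  by_cases hp23 : p = 23
  · subst hp23
    constructor
    · intro h; norm_num [pd_small h0 h1 h2 hrec] at h
    · rintro ⟨X, Y, hX, h⟩; exact (pd_nosol hX h (by simp)).elim
  have : Fact p.Prime := ⟨hp⟩
  obtain ⟨K, _, _, _⟩ := pd_exists_field hp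
  obtain ⟨w, hw⟩ := pd_exists_w hp hp3 K
  obtain ⟨α, β, γ, r1, r2, r3⟩ := pd_roots K
  have k23 : (23 : K) ≠ 0 := by
    intro h
    have := (CharP.cast_eq_zero_iff K p 23).1 (by exact_mod_cast h)
    exact hp23 ((Nat.prime_dvd_prime_iff_eq hp (by norm_num)).1 this)
  have hperm := pd_perm (p := p) r1 r2 r3 k23
  have hres := fun ε ε' => pd_res (ε := ε) (ε' := ε') hp hp2 hp3 hw r1 r2 r3
  have hB := pd_B h0 h1 h2 hrec r1 r2 r3 (p - 1)
  have hpe : p - 1 + 3 = p + 2 := by have := hp.two_le; omega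
  rw [hpe] at hB
  simp only [pow_add _ p 2] at hB
  have hD := pd_disc r1 r2 r3
  have ha : α ^ 3 = α + 1 := by linear_combination pd_root r1 r2 r3 α
  have hb : β ^ 3 = β + 1 := by linear_combination pd_root r1 r2 r3 β
  have hc : γ ^ 3 = γ + 1 := by linear_combination pd_root r1 r2 r3 γ
  have hDp : α ^ p = α → β ^ p = β → γ ^ p = γ → ((α - β) * (β - γ) * (γ - α)) ^ p =
      (α - β) * (β - γ) * (γ - α) := by
    intro a b c
    rw [mul_pow, mul_pow, sub_pow_char, sub_pow_char, sub_pow_char, a, b, c]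
  set D := (α - β) * (β - γ) * (γ - α) with hDdef
  have hD0 : D ≠ 0 := by
    intro h; rw [h] at hD; apply k23; linear_combination hD
  have hBid : (p : ℤ) ∣ B (p - 1) ↔ (α ^ p = α ∧ β ^ p = β ∧ γ ^ p = γ) := by
    rw [← CharP.intCast_eq_zero_iff K p]
    constructor
    · intro h
      rw [h, mul_zero] at hB
      rcases hperm with h | h | h
      · exact h
      · exact absurd hB h.2
      · exact absurd hB h.1
    · rintro ⟨a, b, c⟩
      rw [a, b, c] at hB
      have : -D * (B (p - 1) : K) = 0 := by
        rw [← hB]; linear_combination (β - γ) * ha + (γ - α) * hb + (α - β) * hc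
      exact (mul_eq_zero.1 this).resolve_left (neg_ne_zero.2 hD0)
  have it : ∀ x y z : K, x ^ p = y → y ^ p = z → x ^ (p ^ 2) = z := by
    intro x y z h h'; rw [pow_two, pow_mul, h, h']
  rw [hBid]
  constructor
  · rintro ⟨a, b, c⟩
    have hDp := hDp a b c
    have heq := (hres 1 1 (by rw [it _ _ _ a a, it _ _ _ b b, it _ _ _ c c, one_mul])
      (by rw [it _ _ _ a a, it _ _ _ b b, it _ _ _ c c, one_mul])).2 rfl
    obtain ⟨d, hd⟩ := pd_sqr hp hp2 hp23 hD hD0 hDp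
    rcases pd_forms hp hp2 hd with ⟨X, Y, h⟩ | ⟨X, Y, hXo, hYo, h⟩
    · refine ⟨X, Y, ?_, h⟩
      rintro rfl
      have : (23 : ℤ) ∣ p := ⟨Y ^ 2, by rw [h]; ring⟩
      have : 23 ∣ p := by exact_mod_cast this
      exact hp23 ((Nat.prime_dvd_prime_iff_eq (by norm_num) hp).1 this).symm
    · exfalso
      obtain ⟨hY0, hs⟩ := pd_sign hp hD (Or.inr ⟨hXo, h⟩)
      have fin : ∀ X : ℤ, Odd X → 8 * (p : ℤ) = X ^ 2 + 23 * Y ^ 2 → (X : K) = D * Y → False := by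
        intro X hXo h hX
        obtain ⟨b1, b2⟩ := pd_bridge hp hp2 hp3 hw hD hDp hY0 hX
        rcases pd_key2 hp hp2 hp3 hXo hYo h K w hw with hk | hk
        · exact hk (b1.2 heq)
        · exact hk (b2.2 heq)
      rcases hs with hs | hs
      · exact fin X hXo h hs
      · exact fin (-X) hXo.neg (by rw [h]; ring) hs
  · rintro ⟨X, Y, -, h⟩
    obtain ⟨hY0, hs⟩ := pd_sign hp hD (Or.inl h)
    have fin : ∀ X : ℤ, (p : ℤ) = X ^ 2 + 23 * Y ^ 2 → (X : K) = D * Y →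
        (α ^ p = α ∧ β ^ p = β ∧ γ ^ p = γ) := by
      intro X h hX
      have hZ : ∀ n : ℤ, (n : K) ^ p = n := fun n => by
        have := map_intCast (frobenius K p) n
        rwa [frobenius_def] at this
      have hDp : D ^ p = D := by
        apply mul_right_cancel₀ hY0
        rw [← hX, ← hZ X, hX, mul_pow D, hZ]
      obtain ⟨b1, b2⟩ := pd_bridge hp hp2 hp3 hw hD hDp hY0 hX
      have heq : (9 + (1 + 2 * w) * D) ^ ((p ^ 2 - 1) / 3) =
          (9 - (1 + 2 * w) * D) ^ ((p ^ 2 - 1) / 3) := by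
        rcases pd_key1 hp hp2 hp3 h K w hw with hk | hk
        · exact b1.1 hk
        · exact b2.1 hk
      have w3 := pd_w3 hw
      have hwne : w ^ 2 ≠ w := by
        intro hh
        apply pd_w_ne_one hw (pd_ne3 hp hp3 K)
        linear_combination w3 - (w + 1) * hh
      rcases hperm with h | h | ⟨-, ⟨a, b, c⟩ | ⟨a, b, c⟩⟩
      · exact h
      · exfalso
        have := h.1
        rw [hDp] at this
        have : 2 * D = 0 := by linear_combination this
        exact mul_ne_zero (pd_ne2 hp hp2 K) hD0 this
      · exfalso
        refine hwne ((hres w (w ^ 2) ?_ ?_).1 heq)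
        · rw [it _ _ _ a b, it _ _ _ b c, it _ _ _ c a]
          linear_combination (-γ) * w3
        · rw [it _ _ _ a b, it _ _ _ b c, it _ _ _ c a]
          linear_combination (-γ - β * w) * w3
      · exfalso
        refine hwne ((hres (w ^ 2) w ?_ ?_).1 heq).symm
        · rw [it _ _ _ a c, it _ _ _ b a, it _ _ _ c b]
          linear_combination (-β - γ * w) * w3
        · rw [it _ _ _ a c, it _ _ _ b a, it _ _ _ c b]
          linear_combination (-β) * w3
    rcases hs with hs | hs
    · exact fin X h hs
    · exact fin (-X) (by rw [h]; ring) hs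
end
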